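/- arXiv:0909.0564 — 2 statements merged into one kernel-verified Lean document; each statement's English description precedes it below -/
import Mathlib

section
/- Let λ = (λ_1 ≥ λ_2 ≥ … ≥ λ_ℓ > 0) be a partition and let b_1 ≤ b_2 ≤ … ≤ b_ℓ be positive integers. Then the number of semistandard Young tableaux of shape λ in which every entry of row m is at most b_m, for every m, equals det( C(b_i + λ_i − i + j − 1, λ_i − i + j) )_{1 ≤ i,j ≤ ℓ}, where C(a, m) denotes the binomial coefficient, taken to be 0 when m < 0. -/
/-!
Let `hOnes b k` be the number of multisets of size `k` from `b` elements (zero for `k < 0`), so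
that the matrix in question has entries `hOnes (b_i) (λ_i - i + j)`. Both sides of the identity
satisfy the same recursion, and it terminates at trivial cases; no path-switching involution is
needed.

The rule `hOnes b k = hOnes (b - 1) k + hOnes b (k - 1)` (for `b > 0`) applied to row `i`, with
multilinearity of the determinant `D(λ, b)`, gives `D(λ, b) = D(λ, b - e_i) + D(λ - e_i, b)`
(`flagDet_rec`). On tableaux, if `b_{i-1} < b_i` and `λ_i > λ_{i+1}`, the last entry of row `i` is
either less than `b_i`, which leaves a tableau with flag `b - e_i`, or equal to `b_i`, and then the
corner can be removed and put back freely (`ssyt_split`).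

Take for `i` the first row of the last block of equal flags. If `λ_i > λ_{i+1}`, the
two recursions agree. Otherwise `λ_i = λ_{i+1}` and `b_i = b_{i+1}`; then strictness of columns
shows that lowering `b_i` loses no tableau (`ssyt_lower`), while the matrix of `(λ - e_i, b)` has
two equal rows. The process ends when `b_1 = 0` (both sides vanish), when the last part
is zero (drop the row), or when there are no rows. This requires partitions with zero parts and
flags equal to zero, which is why `flagged_aux` is stated in that generality.
-/

open Equiv MvPolynomial

noncomputable section
open scoped Classical

variable {n : ℕ}

/-- The 0-based value of a permutation of `Fin n` on a natural number,
extended by the identity outside `{0, …, n-1}`. -/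
def permVal (v : Equiv.Perm (Fin n)) (j : ℕ) : ℕ :=
  if h : j < n then (v ⟨j, h⟩ : ℕ) else j

/-- The longest element `w₀` of the symmetric group, `w₀(i) = n + 1 - i` (1-based). -/
def longest : Equiv.Perm (Fin n) :=
  ⟨Fin.rev, Fin.rev, Fin.rev_rev, Fin.rev_rev⟩

/-- The Rothe diagram of `v`, as a set of 0-based boxes `(i, j)` where `i` counts rows
from the bottom and `j` columns from the left.  In 1-based terms this is
`{(i,j) : i < n - v(j) + 1 and j < v⁻¹(n - i + 1)}`. -/
def Rothe (v : Equiv.Perm (Fin n)) : Finset (ℕ × ℕ) :=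
  (Finset.range n ×ˢ Finset.range n).filter
    (fun p => p.1 + permVal v p.2 + 1 < n ∧ p.2 < permVal v.symm (n - 1 - p.1))

/-- The rank matrix `r^w_{ij} = #{k ≤ j : w(k) ≥ n - i + 1}` (translated to 0-based `i`, `j`). -/
def rankMat (w : Equiv.Perm (Fin n)) (i j : ℕ) : ℕ :=
  ((Finset.range n).filter (fun t => t ≤ j ∧ n ≤ permVal w t + i + 1)).card

/-- Bruhat order via rank matrices. -/
def bruhatLE (u w : Equiv.Perm (Fin n)) : Prop :=
  ∀ i j : ℕ, rankMat u i j ≤ rankMat w i j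

/-- The essential set of `w`. -/
def essentialSet (w : Equiv.Perm (Fin n)) : Finset (ℕ × ℕ) :=
  (Rothe w).filter (fun p => (p.1 + 1, p.2) ∉ Rothe w ∧ (p.1, p.2 + 1) ∉ Rothe w)

/-- The number of inversions (Coxeter length) of a permutation. -/
def invCount (u : Equiv.Perm (Fin n)) : ℕ :=
  ((Finset.univ : Finset (Fin n × Fin n)).filter
    (fun p => p.1 < p.2 ∧ u p.2 < u p.1)).card

/-- The adjacent transposition `s_l` (`l` 1-based) swapping `l` and `l+1`;
the identity if `l` is out of range. -/
def adjSwap {n : ℕ} (l : ℕ) : Equiv.Perm (Fin n) :=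
  if h : 1 ≤ l ∧ l < n then Equiv.swap ⟨l - 1, by omega⟩ ⟨l, h.2⟩ else 1

/-- The canonical (1-based) label of a box of `D(v)`: the `t`-th box from the left in
(1-based) row `i` gets label `i + t - 1`. -/
def canonLabel (v : Equiv.Perm (Fin n)) (b : ℕ × ℕ) : ℕ :=
  b.1 + ((Rothe v).filter (fun b' => b'.1 = b.1 ∧ b'.2 ≤ b.2)).card

/-- The boxes of `P` listed in reading order: rows from top (largest row index) to bottom,
left to right within each row. -/
def readingList (n : ℕ) (P : Finset (ℕ × ℕ)) : List (ℕ × ℕ) :=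
  ((List.range n).reverse).flatMap
    (fun i => ((List.range n).filter (fun j => decide ((i, j) ∈ P))).map (fun j => (i, j)))

/-- One step of the Demazure product: multiply by `s_ℓ` if that increases length. -/
def demStep (v : Equiv.Perm (Fin n)) (u : Equiv.Perm (Fin n)) (b : ℕ × ℕ) :
    Equiv.Perm (Fin n) :=
  if invCount u < invCount (u * adjSwap (canonLabel v b)) then u * adjSwap (canonLabel v b)
  else u

/-- The Demazure product of a pipe dream `P ⊆ D(v)`, scanning boxes in reading order. -/
def demazure (v : Equiv.Perm (Fin n)) (P : Finset (ℕ × ℕ)) : Equiv.Perm (Fin n) :=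
  (readingList n P).foldl (demStep v) 1

/-- Pipe dreams on `D(v)` whose Demazure product is `x`. -/
def Pipes (v x : Equiv.Perm (Fin n)) : Finset (Finset (ℕ × ℕ)) :=
  (Rothe v).powerset.filter (fun P => demazure v P = x)

/-- Reduced pipe dreams on `D(v)` for `x`. -/
def RedPipes (v x : Equiv.Perm (Fin n)) : Finset (Finset (ℕ × ℕ)) :=
  (Pipes v x).filter (fun P => P.card = invCount x)

/-- Faces of the pipe complex `Δ_{v,w}`: subsets `F ⊆ D(v)` such that `D(v) \ F`
contains a reduced pipe dream for `w₀ w`. -/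
def IsFace (v w : Equiv.Perm (Fin n)) (F : Finset (ℕ × ℕ)) : Prop :=
  F ⊆ Rothe v ∧ ∃ P ∈ RedPipes v (longest * w), P ⊆ Rothe v \ F

/-- The staircase `{(i,j) : i + j ≤ n}` (1-based), translated to 0-based boxes. -/
def staircase (n : ℕ) : Finset (ℕ × ℕ) :=
  (Finset.range n ×ˢ Finset.range n).filter (fun p => p.1 + p.2 + 2 ≤ n)

/-- The label `i + j - 1` (1-based) of a staircase box, in 0-based coordinates. -/
def fkLabel (b : ℕ × ℕ) : ℕ := b.1 + b.2 + 1

/-- One step of the Demazure product for Fomin–Kirillov pipe dreams. -/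
def fkStep (u : Equiv.Perm (Fin n)) (b : ℕ × ℕ) : Equiv.Perm (Fin n) :=
  if invCount u < invCount (u * adjSwap (fkLabel b)) then u * adjSwap (fkLabel b) else u

/-- The Demazure product of an FK pipe dream on the staircase. -/
def fkDemazure (n : ℕ) (P : Finset (ℕ × ℕ)) : Equiv.Perm (Fin n) :=
  (readingList n P).foldl fkStep 1

/-- FK pipe dreams on the staircase with Demazure product `x`. -/
def FKPipes (x : Equiv.Perm (Fin n)) : Finset (Finset (ℕ × ℕ)) :=
  (staircase n).powerset.filter (fun P => fkDemazure n P = x)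

/-- Reduced FK pipe dreams for `x`. -/
def RedFKPipes (x : Equiv.Perm (Fin n)) : Finset (Finset (ℕ × ℕ)) :=
  (FKPipes x).filter (fun P => P.card = invCount x)

/-- The coordinate ring `R_v = k[z_{ij} : (i,j) ∈ D(v)]`. -/
abbrev KLRing (k : Type) [Field k] (v : Equiv.Perm (Fin n)) : Type :=
  MvPolynomial {b : ℕ × ℕ // b ∈ Rothe v} k

/-- The specialized generic matrix `Z^{(v)}`: variables on `D(v)`, `1` in positions
`(n - v(j) + 1, j)` (1-based) and `0` elsewhere. -/
def klMatrix (k : Type) [Field k] (v : Equiv.Perm (Fin n)) :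
    Matrix (Fin n) (Fin n) (KLRing k v) := fun i j =>
  if h : ((i : ℕ), (j : ℕ)) ∈ Rothe v then X ⟨((i : ℕ), (j : ℕ)), h⟩
  else if (i : ℕ) + permVal v j + 1 = n then 1 else 0

/-- The minors of size `1 + r^w_{ij}` of the southwest submatrix `Z^{(v)}_{ij}`
(`(i,j)` a 0-based box, so rows `0..i` and columns `0..j`). -/
def minorsAt (k : Type) [Field k] (v w : Equiv.Perm (Fin n)) (i j : ℕ) :
    Set (KLRing k v) :=
  { d | ∃ ri ci : Fin (rankMat w i j + 1) → Fin n,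
      StrictMono ri ∧ StrictMono ci ∧ (∀ a, (ri a : ℕ) ≤ i) ∧ (∀ a, (ci a : ℕ) ≤ j) ∧
      d = ((klMatrix k v).submatrix ri ci).det }

/-- The Kazhdan–Lusztig ideal `I_{v,w}`. -/
def KLIdeal (k : Type) [Field k] (v w : Equiv.Perm (Fin n)) : Ideal (KLRing k v) :=
  Ideal.span { d | ∃ i j : ℕ, i < n ∧ j < n ∧ d ∈ minorsAt k v w i j }

/-- The essential minors of `I_{v,w}`: those at boxes of the essential set of `w`. -/
def essentialMinors (k : Type) [Field k] (v w : Equiv.Perm (Fin n)) : Set (KLRing k v) :=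
  { d | ∃ b ∈ essentialSet w, d ∈ minorsAt k v w b.1 b.2 }

/-- Significance of a variable: `z_{ij} ≻ z_{kl}` iff `j > l` or (`j = l` and `i < k`),
encoded so that larger significance means ≺-larger variable. -/
def sigIdx (n : ℕ) (b : ℕ × ℕ) : ℕ := b.2 * n + (n - 1 - b.1)

/-- The exponent in a monomial of the variable of significance `s`. -/
def expAt {v : Equiv.Perm (Fin n)} (m : {b : ℕ × ℕ // b ∈ Rothe v} →₀ ℕ) (s : ℕ) : ℕ :=
  ∑ b ∈ m.support, if sigIdx n (b : ℕ × ℕ) = s then m b else 0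

/-- The lexicographic comparison of monomials: `m ≻ m'`. -/
def monGT {v : Equiv.Perm (Fin n)} (m m' : {b : ℕ × ℕ // b ∈ Rothe v} →₀ ℕ) : Prop :=
  ∃ s : ℕ, expAt m' s < expAt m s ∧ ∀ t : ℕ, s < t → expAt m t = expAt m' t

/-- `L` is the ≺-leading term of `f`. -/
def IsLeadTerm (k : Type) [Field k] {v : Equiv.Perm (Fin n)} (f L : KLRing k v) : Prop :=
  ∃ m ∈ f.support, (∀ m' ∈ f.support, m' ≠ m → monGT m m') ∧
    L = MvPolynomial.monomial m (f.coeff m)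

/-- The initial ideal of `I` with respect to `≺`: the ideal generated by the leading
terms of all nonzero elements of `I`. -/
def initialIdeal (k : Type) [Field k] {v : Equiv.Perm (Fin n)} (I : Ideal (KLRing k v)) :
    Ideal (KLRing k v) :=
  Ideal.span { L | ∃ f ∈ I, f ≠ 0 ∧ IsLeadTerm k f L }


/-- `i` (1-based) is the last ascent of `v`: `v(i) < v(i+1)` and no ascent occurs later. -/
def IsLastAscent (v : Equiv.Perm (Fin n)) (i : ℕ) : Prop :=
  1 ≤ i ∧ i < n ∧ permVal v (i - 1) < permVal v i ∧
    ∀ i' : ℕ, i < i' → i' < n → ¬ permVal v (i' - 1) < permVal v i'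

/-- The box `z_last = (n - v(i+1) + 1, i)` (1-based), in 0-based coordinates,
where `i` is the last ascent of `v`. -/
def zlastBox (v : Equiv.Perm (Fin n)) (i : ℕ) : ℕ × ℕ :=
  (n - permVal v i - 1, i - 1)

/-- The relabeling map `φ`: delete the box `z_last` and move every other box of
column `i` (1-based) one step to the right. -/
def phiMap (v : Equiv.Perm (Fin n)) (i : ℕ) (P : Finset (ℕ × ℕ)) : Finset (ℕ × ℕ) :=
  P.filter (fun b => b.2 ≠ i - 1) ∪
    ((P.filter (fun b => b.2 = i - 1 ∧ b.1 ≠ n - permVal v i - 1)).image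
      (fun b => (b.1, b.2 + 1)))

/-- A semistandard Young tableau of shape `λ` (rows weakly increasing, columns strictly
increasing downward) with every entry of row `m` at most `bF m`; entries are recorded
as a function on 1-based (row, column) boxes, `0` outside the diagram. -/
def IsFlaggedSSYT (lam bF : ℕ → ℕ) (T : ℕ × ℕ → ℕ) : Prop :=
  (∀ m c : ℕ, 1 ≤ m → 1 ≤ c → c ≤ lam m → 1 ≤ T (m, c) ∧ T (m, c) ≤ bF m) ∧
  (∀ m c : ℕ, ¬(1 ≤ m ∧ 1 ≤ c ∧ c ≤ lam m) → T (m, c) = 0) ∧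
  (∀ m c : ℕ, 1 ≤ m → 1 ≤ c → c + 1 ≤ lam m → T (m, c) ≤ T (m, c + 1)) ∧
  (∀ m c : ℕ, 1 ≤ m → 1 ≤ c → c ≤ lam (m + 1) → T (m, c) < T (m + 1, c))

/-! ### The determinant and its recursion -/

/-- The complete homogeneous symmetric polynomial `h_k` in `b` variables evaluated at
`(1, …, 1)`, with `h_k = 0` for `k < 0`; unlike `C(b + k - 1, k)` with truncated subtraction, it is
also correct for `b = 0`. -/
def hOnes (b : ℕ) (k : ℤ) : ℤ := if 0 ≤ k then (Nat.multichoose b k.toNat : ℤ) else 0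

lemma hOnes_neg {b : ℕ} {k : ℤ} (h : k < 0) : hOnes b k = 0 := by
  simp [hOnes, h]

lemma hOnes_zero_right (b : ℕ) : hOnes b 0 = 1 := by
  simp [hOnes]

lemma hOnes_zero_left {k : ℤ} (h : 0 < k) : hOnes 0 k = 0 := by
  obtain ⟨m, rfl⟩ : ∃ m : ℕ, k = m + 1 := ⟨(k - 1).toNat, by omega⟩
  have : ((m : ℤ) + 1).toNat = m + 1 := by omega
  simp [hOnes, this]

lemma hOnes_succ (b : ℕ) (k : ℤ) : hOnes (b + 1) k = hOnes b k + hOnes (b + 1) (k - 1) := by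
  rcases lt_trichotomy k 0 with h | rfl | h
  · rw [hOnes_neg h, hOnes_neg h, hOnes_neg (by omega)]; rfl
  · rw [hOnes_zero_right, hOnes_zero_right, hOnes_neg (by omega)]; rfl
  · obtain ⟨m, rfl⟩ : ∃ m : ℕ, k = m + 1 := ⟨(k - 1).toNat, by omega⟩
    have h1 : ((m : ℤ) + 1).toNat = m + 1 := by omega
    have h2 : (0 : ℤ) ≤ (m : ℤ) + 1 := by omega
    simp [hOnes, h1, h2, Nat.multichoose_succ_succ]

/-- The flagged Jacobi–Trudi matrix at `(1, …, 1)`. Parts and flags are indexed from `1`, as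
in `IsFlaggedSSYT`, matrix indices from `0`. -/
def flagMat (l : ℕ) (lam b : ℕ → ℕ) : Matrix (Fin l) (Fin l) ℤ :=
  Matrix.of fun i j => hOnes (b ((i : ℕ) + 1)) ((lam ((i : ℕ) + 1) : ℤ) + (j : ℕ) - (i : ℕ))

lemma flagDet_rec (l : ℕ) (lam b : ℕ → ℕ) (i : ℕ) (hi : 1 ≤ i) (hil : i ≤ l)
    (hlam : 0 < lam i) (hb : 0 < b i) :
    (flagMat l lam b).det = (flagMat l lam (Function.update b i (b i - 1))).det
      + (flagMat l (Function.update lam i (lam i - 1)) b).det := by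
  obtain ⟨r, rfl⟩ : ∃ r, i = r + 1 := ⟨i - 1, by omega⟩
  let R : Fin l := ⟨r, by omega⟩
  have e1 : flagMat l lam (Function.update b (r + 1) (b (r + 1) - 1)) =
      (flagMat l lam b).updateRow R
        (flagMat l lam (Function.update b (r + 1) (b (r + 1) - 1)) R) := by
    ext s j
    by_cases h : s = R
    · subst h; simp
    · have : (s : ℕ) ≠ r := fun h' => h (Fin.ext h')
      simp [Matrix.updateRow_ne h, flagMat, this]
  have e2 : flagMat l (Function.update lam (r + 1) (lam (r + 1) - 1)) b =
      (flagMat l lam b).updateRow R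
        (flagMat l (Function.update lam (r + 1) (lam (r + 1) - 1)) b R) := by
    ext s j
    by_cases h : s = R
    · subst h; simp
    · have : (s : ℕ) ≠ r := fun h' => h (Fin.ext h')
      simp [Matrix.updateRow_ne h, flagMat, this]
  have e3 : flagMat l lam b = (flagMat l lam b).updateRow R
      (flagMat l lam (Function.update b (r + 1) (b (r + 1) - 1)) R
        + flagMat l (Function.update lam (r + 1) (lam (r + 1) - 1)) b R) := by
    ext s j
    by_cases h : s = R
    · subst h
      obtain ⟨d, hd⟩ : ∃ d, b (r + 1) = d + 1 := ⟨b (r + 1) - 1, by omega⟩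
      have hc : ((lam (r + 1) - 1 : ℕ) : ℤ) = lam (r + 1) - 1 := by omega
      simp only [Matrix.updateRow_self, Pi.add_apply, flagMat, Matrix.of_apply, R,
        Function.update_self, hd, hc, Nat.add_sub_cancel]
      rw [hOnes_succ]
      congr 2
      ring
    · rw [Matrix.updateRow_ne h]
  rw [e3, Matrix.det_updateRow_add, ← e1, ← e2]

/-- Rows `i` and `i + 1` coincide when `b_i = b_{i+1}` and `λ_i = λ_{i+1} - 1`. -/
lemma flagDet_eq_zero_of_rows (l : ℕ) (lam b : ℕ → ℕ) (i : ℕ) (hi : 1 ≤ i) (hil : i < l)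
    (hlam : lam (i + 1) = lam i + 1) (hb : b i = b (i + 1)) :
    (flagMat l lam b).det = 0 := by
  obtain ⟨r, rfl⟩ : ∃ r, i = r + 1 := ⟨i - 1, by omega⟩
  have hne : (⟨r, by omega⟩ : Fin l) ≠ ⟨r + 1, hil⟩ := by simp [Fin.ext_iff]
  apply Matrix.det_zero_of_row_eq hne
  funext j
  simp only [flagMat, Matrix.of_apply, hb, hlam]
  congr 1
  push_cast
  ring

lemma flagDet_eq_zero_of_flag (l : ℕ) (lam b : ℕ → ℕ) (hl : 1 ≤ l) (hlam : 0 < lam 1)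
    (hb : b 1 = 0) : (flagMat l lam b).det = 0 := by
  apply Matrix.det_eq_zero_of_row_eq_zero (⟨0, hl⟩ : Fin l)
  intro j
  simp only [flagMat, Matrix.of_apply, zero_add, hb]
  apply hOnes_zero_left
  push_cast
  omega

/-- A zero last part makes the last row `(0, …, 0, 1)`. -/
lemma flagDet_last (l : ℕ) (lam b : ℕ → ℕ) (hlam : lam (l + 1) = 0) :
    (flagMat (l + 1) lam b).det = (flagMat l lam b).det := by
  rw [Matrix.det_succ_row _ (Fin.last l), Finset.sum_eq_single (Fin.last l)]
  · have h1 : flagMat (l + 1) lam b (Fin.last l) (Fin.last l) = 1 := by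
      simp [flagMat, hlam, hOnes_zero_right]
    have h2 : (flagMat (l + 1) lam b).submatrix (Fin.last l).succAbove (Fin.last l).succAbove
        = flagMat l lam b := by
      ext i j
      simp [flagMat, Fin.succAbove_last]
    rw [h1, h2, Even.neg_one_pow ⟨_, rfl⟩]
    ring
  · intro j _ hj
    have hlt : (j : ℕ) < l := by
      have := Fin.lt_last_iff_ne_last.mpr hj
      simpa [Fin.lt_def] using this
    have : flagMat (l + 1) lam b (Fin.last l) j = 0 := by
      simp only [flagMat, Matrix.of_apply, Fin.val_last, hlam]
      apply hOnes_neg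
      push_cast
      omega
    simp [this]
  · simp

/-! ### Flagged tableaux -/

lemma ssyt_row_le {lam b : ℕ → ℕ} {T : ℕ × ℕ → ℕ} (hT : IsFlaggedSSYT lam b T) {m c d : ℕ}
    (hm : 1 ≤ m) (hc : 1 ≤ c) (hcd : c ≤ d) (hd : d ≤ lam m) : T (m, c) ≤ T (m, d) := by
  induction d, hcd using Nat.le_induction with
  | base => exact le_rfl
  | succ d hcd ih => exact (ih (by omega)).trans (hT.2.2.1 m d hm (by omega) hd)

/-- Lowering the flag of row `i` keeps exactly the tableaux whose entries in row `i` are all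
less than `b_i`. -/
lemma ssyt_update_flag {lam b : ℕ → ℕ} {i : ℕ} {T : ℕ × ℕ → ℕ} :
    IsFlaggedSSYT lam (Function.update b i (b i - 1)) T ↔
      IsFlaggedSSYT lam b T ∧ ∀ c, 1 ≤ i → 1 ≤ c → c ≤ lam i → T (i, c) < b i := by
  constructor
  · rintro ⟨h1, h2, h3, h4⟩
    refine ⟨⟨fun m c hm hc hcl => ?_, h2, h3, h4⟩, fun c hi hc hcl => ?_⟩
    · have := h1 m c hm hc hcl
      rcases eq_or_ne m i with rfl | hne
      · rw [Function.update_self] at this; omega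
      · rwa [Function.update_of_ne hne] at this
    · have := h1 i c hi hc hcl
      rw [Function.update_self] at this; omega
  · rintro ⟨⟨h1, h2, h3, h4⟩, h5⟩
    refine ⟨fun m c hm hc hcl => ?_, h2, h3, h4⟩
    have := h1 m c hm hc hcl
    rcases eq_or_ne m i with rfl | hne
    · have := h5 c hm hc hcl
      rw [Function.update_self]; omega
    · rwa [Function.update_of_ne hne]

/-- When rows `i` and `i + 1` have the same length and the same flag, column strictness already
forces the entries of row `i` below `b_i`. -/
lemma ssyt_lower {lam b : ℕ → ℕ} {i : ℕ} (hi : 1 ≤ i) (hlam : lam (i + 1) = lam i)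
    (hb : b i = b (i + 1)) :
    {T | IsFlaggedSSYT lam b T} = {T | IsFlaggedSSYT lam (Function.update b i (b i - 1)) T} := by
  ext T
  simp only [Set.mem_ofPred_eq, ssyt_update_flag, iff_self_and]
  intro hT c _ hc hcl
  have h1 := hT.2.2.2 i c hi hc (by omega)
  have h2 := (hT.1 (i + 1) c (by omega) hc (by omega)).2
  omega

/-- The tableaux whose row `i` ends below `b_i` form the first set of the union; those whose row
`i` ends in `b_i` arise from tableaux without this corner and form the second. The hypotheses
`λ_{i+1} < λ_i` and `b_{i-1} < b_i` say that putting `b_i` back in the corner never violates a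
column condition. -/
lemma ssyt_split {lam b : ℕ → ℕ} {i : ℕ} (hi : 1 ≤ i) (hlam : lam (i + 1) < lam i)
    (hanti : ∀ m, 1 ≤ m → lam (m + 1) ≤ lam m)
    (hb0 : 0 < b i) (hb : i = 1 ∨ b (i - 1) < b i) :
    {T | IsFlaggedSSYT lam b T} =
      {T | IsFlaggedSSYT lam (Function.update b i (b i - 1)) T} ∪
        (fun T => Function.update T (i, lam i) (b i)) ''
          {T | IsFlaggedSSYT (Function.update lam i (lam i - 1)) b T} := by
  have key : ∀ m, m ≠ i → Function.update lam i (lam i - 1) m = lam m :=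
    fun m hm => Function.update_of_ne hm _ _
  have keyi : Function.update lam i (lam i - 1) i = lam i - 1 := Function.update_self ..
  have key_le : ∀ m, Function.update lam i (lam i - 1) m ≤ lam m := by
    intro m
    rcases eq_or_ne m i with rfl | hne
    · rw [keyi]; omega
    · rw [key m hne]
  ext T
  simp only [Set.mem_union, Set.mem_ofPred_eq, Set.mem_image]
  constructor
  · intro hT
    by_cases hlast : T (i, lam i) < b i
    · left
      rw [ssyt_update_flag]
      exact ⟨hT, fun c _ hc hcl => (ssyt_row_le hT hi hc hcl le_rfl).trans_lt hlast⟩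
    · right
      have heq : T (i, lam i) = b i :=
        le_antisymm (hT.1 i (lam i) hi (by omega) le_rfl).2 (not_lt.mp hlast)
      refine ⟨Function.update T (i, lam i) 0, ⟨?_, ?_, ?_, ?_⟩, ?_⟩
      · intro m c hm hc hcl
        rw [Function.update_of_ne]
        · exact hT.1 m c hm hc (hcl.trans (key_le m))
        · rintro ⟨⟩
          rw [keyi] at hcl; omega
      · intro m c hmc
        by_cases h : (m, c) = (i, lam i)
        · rw [h, Function.update_self]
        · rw [Function.update_of_ne h]
          apply hT.2.1
          rintro ⟨hm, hc, hcl⟩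
          apply hmc
          refine ⟨hm, hc, ?_⟩
          rcases eq_or_ne m i with rfl | hne
          · rw [keyi]
            have : c ≠ lam m := fun h' => h (by rw [h'])
            omega
          · rwa [key m hne]
      · intro m c hm hc hcl
        have hle := key_le m
        rw [Function.update_of_ne, Function.update_of_ne]
        · exact hT.2.2.1 m c hm hc (by omega)
        all_goals
          intro h
          simp only [Prod.mk.injEq] at h
          obtain ⟨rfl, h⟩ := h
          rw [keyi] at hcl; omega
      · intro m c hm hc hcl
        have hle := key_le (m + 1)
        rw [Function.update_of_ne, Function.update_of_ne]
        · exact hT.2.2.2 m c hm hc (by omega)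
        · intro h
          simp only [Prod.mk.injEq] at h
          obtain ⟨rfl, h⟩ := h
          rw [keyi] at hcl; omega
        · intro h
          simp only [Prod.mk.injEq] at h
          obtain ⟨rfl, h⟩ := h
          omega
      · rw [Function.update_idem, ← heq, Function.update_eq_self]
  · rintro (hT | ⟨T, hT, rfl⟩)
    · exact (ssyt_update_flag.mp hT).1
    · obtain ⟨h1, h2, h3, h4⟩ := hT
      have shrink : ∀ m c, (m, c) ≠ (i, lam i) → c ≤ lam m →
          c ≤ Function.update lam i (lam i - 1) m := by
        intro m c h hcl
        rcases eq_or_ne m i with rfl | hne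
        · have : c ≠ lam m := fun h' => h (by rw [h'])
          rw [keyi]; omega
        · rwa [key m hne]
      refine ⟨?_, ?_, ?_, ?_⟩
      · intro m c hm hc hcl
        by_cases h : (m, c) = (i, lam i)
        · rw [h, Function.update_self]
          obtain ⟨rfl, -⟩ := Prod.mk.inj h
          omega
        · rw [Function.update_of_ne h]
          exact h1 m c hm hc (shrink m c h hcl)
      · intro m c hmc
        rw [Function.update_of_ne]
        · apply h2
          rintro ⟨hm, hc, hcl⟩
          exact hmc ⟨hm, hc, hcl.trans (key_le m)⟩
        · intro h
          obtain ⟨rfl, rfl⟩ := Prod.mk.inj h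
          exact hmc ⟨hi, by omega, le_rfl⟩
      · intro m c hm hc hcl
        have hne : (m, c) ≠ (i, lam i) := by
          intro h
          obtain ⟨rfl, rfl⟩ := Prod.mk.inj h
          omega
        rw [Function.update_of_ne hne]
        by_cases h : (m, c + 1) = (i, lam i)
        · rw [h, Function.update_self]
          have := (h1 m c hm hc (shrink m c hne (by omega))).2
          obtain ⟨rfl, -⟩ := Prod.mk.inj h
          exact this
        · rw [Function.update_of_ne h]
          exact h3 m c hm hc (shrink m _ h hcl)
      · intro m c hm hc hcl
        have hne : (m, c) ≠ (i, lam i) := by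
          intro h
          obtain ⟨rfl, rfl⟩ := Prod.mk.inj h
          omega
        rw [Function.update_of_ne hne]
        by_cases h : (m + 1, c) = (i, lam i)
        · rw [h, Function.update_self]
          have h5 := (h1 m c hm hc (shrink m c hne (hcl.trans (hanti m hm)))).2
          obtain ⟨rfl, -⟩ := Prod.mk.inj h
          -- The entry above the restored corner is at most `b_{i-1} < b_i`.
          rw [Nat.add_sub_cancel] at hb
          omega
        · rw [Function.update_of_ne h]
          exact h4 m c hm hc (shrink _ c h hcl)

lemma ssyt_split_card {lam b : ℕ → ℕ} {i : ℕ} (hi : 1 ≤ i) (hlam : lam (i + 1) < lam i)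
    (hanti : ∀ m, 1 ≤ m → lam (m + 1) ≤ lam m)
    (hb0 : 0 < b i) (hb : i = 1 ∨ b (i - 1) < b i)
    (f1 : {T | IsFlaggedSSYT lam (Function.update b i (b i - 1)) T}.Finite)
    (f2 : {T | IsFlaggedSSYT (Function.update lam i (lam i - 1)) b T}.Finite) :
    {T | IsFlaggedSSYT lam b T}.Finite ∧
    {T | IsFlaggedSSYT lam b T}.ncard =
      {T | IsFlaggedSSYT lam (Function.update b i (b i - 1)) T}.ncard +
        {T | IsFlaggedSSYT (Function.update lam i (lam i - 1)) b T}.ncard := by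
  rw [ssyt_split hi hlam hanti hb0 hb]
  refine ⟨f1.union (f2.image _), ?_⟩
  rw [Set.ncard_union_eq ?_ f1 (f2.image _), Set.InjOn.ncard_image]
  · intro T hT T' hT' h
    funext x
    by_cases hx : x = (i, lam i)
    · -- Both tableaux vanish at the removed corner.
      have hout : ¬(1 ≤ i ∧ 1 ≤ lam i ∧ lam i ≤ Function.update lam i (lam i - 1) i) := by
        rw [Function.update_self]; omega
      rw [hx, hT.2.1 _ _ hout, hT'.2.1 _ _ hout]
    · have := congrFun h x
      simpa [Function.update_of_ne hx] using this
  · rw [Set.disjoint_left]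
    rintro _ hT ⟨T, -, rfl⟩
    have := (ssyt_update_flag.mp hT).2 (lam i) hi (by omega) le_rfl
    simp at this

/-! ### Comparison of the two recursions -/

/-- The identity with zero parts and zero flags allowed, by induction on a bound `N` for
`l + |λ| + ∑ b_m`. Finiteness of the set of tableaux is carried along, because `Set.ncard` is
additive over disjoint unions only for finite sets. -/
lemma flagged_aux (N : ℕ) : ∀ (l : ℕ) (lam b : ℕ → ℕ),
    l + ∑ m ∈ Finset.Icc 1 l, (lam m + b m) ≤ N →
    (∀ m, l < m → lam m = 0) →
    (∀ m, 1 ≤ m → lam (m + 1) ≤ lam m) →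
    (∀ m, 1 ≤ m → m < l → b m ≤ b (m + 1)) →
    {T | IsFlaggedSSYT lam b T}.Finite ∧
      ({T | IsFlaggedSSYT lam b T}.ncard : ℤ) = (flagMat l lam b).det := by
  induction N with
  | zero =>
    intro l lam b hN hz _ _
    obtain rfl : l = 0 := by omega
    have : {T | IsFlaggedSSYT lam b T} = {fun _ => 0} := by
      ext T
      simp only [Set.mem_ofPred_eq, Set.mem_singleton_iff]
      constructor
      · intro hT
        funext ⟨m, c⟩
        apply hT.2.1
        rintro ⟨hm, hc, hcl⟩
        rw [hz m hm] at hcl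
        omega
      · rintro rfl
        refine ⟨?_, fun _ _ _ => rfl, fun _ _ _ _ _ => le_rfl, ?_⟩
        · intro m c hm hc hcl
          rw [hz m hm] at hcl
          omega
        · intro m c hm hc hcl
          rw [hz (m + 1) (by omega)] at hcl
          omega
    rw [this]
    simp
  | succ N ih =>
    intro l lam b hN hz hanti hmono
    rcases Nat.eq_zero_or_pos l with rfl | hl
    · exact ih 0 lam b (by simp) hz hanti hmono
    rcases Nat.eq_zero_or_pos (lam l) with hll | hll
    · obtain ⟨k, rfl⟩ : ∃ k, l = k + 1 := ⟨l - 1, by omega⟩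
      rw [flagDet_last k lam b hll]
      rw [Finset.sum_Icc_succ_top (by omega)] at hN
      refine ih k lam b (by omega) (fun m hm => ?_) hanti (fun m h1 h2 => hmono m h1 (by omega))
      rcases eq_or_ne m (k + 1) with rfl | hne
      · exact hll
      · exact hz m (by omega)
    have hpos : ∀ m, 1 ≤ m → m ≤ l → 0 < lam m := by
      intro m hm hml
      induction hml using Nat.decreasingInduction with
      | self => exact hll
      | of_succ k hk ih' => exact (ih' (by omega)).trans_le (hanti k hm)
    rcases Nat.eq_zero_or_pos (b 1) with hb1 | hb1
    · have hempty : {T | IsFlaggedSSYT lam b T} = ∅ := by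
        rw [Set.eq_empty_iff_forall_notMem]
        intro T hT
        have := hT.1 1 1 le_rfl le_rfl (hpos 1 le_rfl hl)
        omega
      rw [hempty, flagDet_eq_zero_of_flag l lam b hl (hpos 1 le_rfl hl) hb1]
      simp
    -- `i` is the first row of the last block of equal flags.
    obtain ⟨i, hi, hil, hbi, hbnext⟩ : ∃ i, 1 ≤ i ∧ i ≤ l ∧ (i = 1 ∨ b (i - 1) < b i) ∧
        (i < l → b i = b (i + 1)) := by
      let P : ℕ → Prop := fun i => 1 ≤ i ∧ (i = 1 ∨ b (i - 1) < b i)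
      have hP1 : P 1 := ⟨le_rfl, Or.inl rfl⟩
      have hP := Nat.findGreatest_spec (P := P) hl hP1
      refine ⟨Nat.findGreatest P l, hP.1, Nat.findGreatest_le l, hP.2, fun hlt => ?_⟩
      have hnot := Nat.findGreatest_is_greatest (P := P) (Nat.lt_succ_self _) hlt
      have hle := hmono _ hP.1 hlt
      by_contra hne
      exact hnot ⟨by omega, Or.inr (by simpa using lt_of_le_of_ne hle hne)⟩
    have hbpos : 0 < b i := by
      rcases hbi with rfl | h
      · exact hb1
      · omega
    have hlampos := hpos i hi hil
    have sum_lt : ∀ f g : ℕ → ℕ, (∀ m, f m ≤ g m) → f i < g i →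
        ∑ m ∈ Finset.Icc 1 l, f m < ∑ m ∈ Finset.Icc 1 l, g m := fun f g h h' =>
      Finset.sum_lt_sum (fun m _ => h m) ⟨i, Finset.mem_Icc.mpr ⟨hi, hil⟩, h'⟩
    have upd_le : ∀ f : ℕ → ℕ, ∀ m, Function.update f i (f i - 1) m ≤ f m := by
      intro f m
      rcases eq_or_ne m i with rfl | hne
      · rw [Function.update_self]; omega
      · rw [Function.update_of_ne hne]
    have h1 := ih l lam (Function.update b i (b i - 1))
      (by
        have := sum_lt (fun m => lam m + Function.update b i (b i - 1) m)
          (fun m => lam m + b m) (fun m => Nat.add_le_add_left (upd_le b m) _)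
          (by simp only [Function.update_self]; omega)
        omega) hz hanti
      (by
        intro m hm hml
        rcases eq_or_ne (m + 1) i with rfl | hne
        · rw [Function.update_self, Function.update_of_ne (by omega)]
          rw [Nat.add_sub_cancel] at hbi
          omega
        · rw [Function.update_of_ne hne]
          exact (upd_le b m).trans (hmono m hm hml))
    have hdet := flagDet_rec l lam b i hi hil hlampos hbpos
    rcases (hanti i hi).lt_or_eq with hlt | heq
    · have h2 := ih l (Function.update lam i (lam i - 1)) b
        (by
          have := sum_lt (fun m => Function.update lam i (lam i - 1) m + b m)
            (fun m => lam m + b m) (fun m => Nat.add_le_add_right (upd_le lam m) _)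
            (by simp only [Function.update_self]; omega)
          omega)
        (fun m hm => Nat.le_zero.mp ((upd_le lam m).trans (hz m hm).le))
        (by
          intro m hm
          rcases eq_or_ne m i with rfl | hne
          · rw [Function.update_self, Function.update_of_ne (by omega)]
            omega
          · rw [Function.update_of_ne hne]
            exact (upd_le lam _).trans (hanti m hm)) hmono
      obtain ⟨hfin, hcard⟩ := ssyt_split_card hi hlt hanti hbpos hbi h1.1 h2.1
      refine ⟨hfin, ?_⟩
      rw [hcard, hdet, ← h1.2, ← h2.2]
      push_cast
      rfl
    · have hil' : i < l := by
        rcases hil.lt_or_eq with h | rfl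
        · exact h
        · rw [hz (i + 1) (by omega)] at heq
          omega
      rw [ssyt_lower hi heq (hbnext hil'), hdet,
        flagDet_eq_zero_of_rows l (Function.update lam i (lam i - 1)) b i hi hil'
          (by rw [Function.update_self, Function.update_of_ne (by omega)]; omega) (hbnext hil'),
        add_zero]
      exact h1

/-- the flagged Jacobi–Trudi / Gessel–Viennot determinant: the number
of flagged semistandard tableaux of shape `λ` with flags `b` equals
`det(C(b_i + λ_i - i + j - 1, λ_i - i + j))_{1 ≤ i,j ≤ ℓ}`. -/
theorem flagged_ssyt_determinant (l : ℕ) (lam bF : ℕ → ℕ)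
    (hlam_pos : ∀ m : ℕ, 1 ≤ m → m ≤ l → 0 < lam m)
    (hlam_zero : ∀ m : ℕ, m = 0 ∨ l < m → lam m = 0)
    (hlam_anti : ∀ m m' : ℕ, 1 ≤ m → m ≤ m' → m' ≤ l → lam m' ≤ lam m)
    (hb_pos : ∀ m : ℕ, 1 ≤ m → m ≤ l → 0 < bF m)
    (hb_mono : ∀ m m' : ℕ, 1 ≤ m → m ≤ m' → m' ≤ l → bF m ≤ bF m') :
    (Set.ncard {T : ℕ × ℕ → ℕ | IsFlaggedSSYT lam bF T} : ℤ)
      = Matrix.det (Matrix.of fun i j : Fin l =>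
          if ((i : ℕ) + 1) ≤ lam ((i : ℕ) + 1) + ((j : ℕ) + 1)
          then ((bF ((i : ℕ) + 1) + lam ((i : ℕ) + 1) + ((j : ℕ) + 1) - 1
                  - ((i : ℕ) + 1)).choose
                (lam ((i : ℕ) + 1) + ((j : ℕ) + 1) - ((i : ℕ) + 1)) : ℤ)
          else 0) := by
  have h := (flagged_aux _ l lam bF le_rfl (fun m hm => hlam_zero m (Or.inr hm)) (by
    intro m hm
    rcases Nat.lt_or_ge l (m + 1) with h | h
    · rw [hlam_zero (m + 1) (Or.inr h)]
      exact Nat.zero_le _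
    · exact hlam_anti m (m + 1) hm (by omega) h)
    (fun m hm hml => hb_mono m (m + 1) hm (by omega) hml)).2
  rw [h]
  congr 1
  ext i j
  simp only [flagMat, Matrix.of_apply, hOnes]
  have hb := hb_pos ((i : ℕ) + 1) (by omega) i.2
  by_cases hij : (i : ℕ) + 1 ≤ lam ((i : ℕ) + 1) + ((j : ℕ) + 1)
  · rw [if_pos hij, if_pos (by omega), Nat.multichoose_eq]
    congr 2 <;> omega
  · rw [if_neg hij, if_neg (by omega)]

end
end

section
/- For v, w ∈ S_n, define the Laurent polynomial K_{v,w}(t_1,…,t_n) = Σ_F [ ∏_{(i,j)∈F} (t_{v(j)}/t_{n−i+1}) · ∏_{(i,j)∈D(v)∖F} (1 − t_{v(j)}/t_{n−i+1}) ], the sum over all faces F of the pipe complex Δ_{v,w}. Then: (i) K_{v,w} = 0 if v ≰ w in Bruhat order; (ii) K_{w_0, w_0} = 1; (iii) if v ≠ w_0 and i is the last ascent of v (the largest index with v(i) < v(i+1)), then K_{v,w} = K_{v s_i, w} when ℓ(w s_i) < ℓ(w), and K_{v,w} = K_{v s_i, w} + (1 − t_{v(i)}/t_{v(i+1)})·(K_{v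 s_i, w s_i} − K_{v s_i, w}) when ℓ(w s_i) > ℓ(w). -/
/-!
Reading `D(v)` row by row gives a word in the adjacent transpositions, and the faces of the pipe
complex are the sets of boxes whose complement still contains a reduced word for `longest * w`
(a subword of length `ℓ(x)` has Demazure product `x` exactly when its ordinary product is `x`,
`foldl_demStep_eq_iff`).  Everything rests on comparing the words of `D(v)` and `D(v s_i)`, where
`i` is the last ascent of `v`, at the adjacent positions `p` and `q`.

Boxes of `D(v)` correspond to non-inversions of `v`.  The box `z` of the non-inversion `(p, q)` has
label `i`, and all boxes read after it have labels at most `i - 2`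
(`LastAsc.canonLabel_z`, `LastAsc.canonLabel_after`), so its letter can be moved to the end of the
word.  Deleting `z` and moving column `p` to column `q` turns `D(v)` into `D(v s_i)`, compatibly
with labels, reading order and weights (`LastAsc.hasWord_image`, `boxRatio_colSwap`).  Hence the
word of `D(v)` is the word of `D(v s_i)` followed by `s_i`.

Let `x = longest * w` and let `S` be a set of boxes without `z`.  If `x s_i > x`, then `S ∪ {z}`
contains a reduced word for `x` iff `S` does; if `x s_i < x`, then `S ∪ {z}` contains one iff `S`
contains a reduced word for `x s_i`, by the exchange property (`exchange`).  Splitting the sum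
defining `K_{v,w}` according to whether a face contains `z` gives the two cases of the recursion.
The vanishing statement follows from the recursion by induction on `D(v)`, since at an ascent `p`
of `v` the rank conditions in column `p` are implied by those in the adjacent columns
(`bruhatLE_of_ne`); the base case is `v = longest`, whose diagram is empty.
-/

open Equiv MvPolynomial

noncomputable section
open scoped Classical

variable {n : ℕ}

/-- The field of fractions of `ℤ[t_i : i ∈ ℕ]`, in which the Laurent polynomial ring
`ℤ[t_1^{±1},…,t_n^{±1}]` embeds. -/
abbrev LaurentField : Type := FractionRing (MvPolynomial ℕ ℤ)

/-- The image of the variable `t_m` (1-based). -/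
def tv (m : ℕ) : LaurentField := algebraMap (MvPolynomial ℕ ℤ) LaurentField (X m)

/-- The factor `t_{v(j)}/t_{n-i+1}` attached to a (0-based) box of `D(v)`. -/
def boxRatio {n : ℕ} (v : Equiv.Perm (Fin n)) (b : ℕ × ℕ) : LaurentField :=
  tv (permVal v b.2 + 1) / tv (n - b.1)

/-- The `K`-polynomial `K_{v,w}(t₁,…,t_n)` of the Stanley–Reisner ring of the pipe
complex `Δ_{v,w}`, for the grading induced by the usual torus action:
`Σ_F ∏_{b∈F} t_{v(j)}/t_{n-i+1} ∏_{b∈D(v)∖F} (1 - t_{v(j)}/t_{n-i+1})`,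
summed over the faces `F` of `Δ_{v,w}`. -/
def Kpoly {n : ℕ} (v w : Equiv.Perm (Fin n)) : LaurentField :=
  ∑ F ∈ (Rothe v).powerset.filter (fun F => IsFace v w F),
    (∏ b ∈ F, boxRatio v b) * ∏ b ∈ Rothe v \ F, (1 - boxRatio v b)

/-! ### Length and words in the symmetric group -/

/-- Apart from the pair `(p, q)` itself, multiplying by `s_p` permutes the inversions. -/
lemma invCount_erase (u : Equiv.Perm (Fin n)) {p q : Fin n} (hpq : (q : ℕ) = p + 1) :
    (((Finset.univ : Finset (Fin n × Fin n)).filter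
      (fun x => x.1 < x.2 ∧ (u * swap p q) x.2 < (u * swap p q) x.1)).erase (p, q)).card =
    (((Finset.univ : Finset (Fin n × Fin n)).filter
      (fun x => x.1 < x.2 ∧ u x.2 < u x.1)).erase (p, q)).card := by
  have key : ∀ a b : Fin n, a < b → (a, b) ≠ (p, q) →
      swap p q a < swap p q b ∧ (swap p q a, swap p q b) ≠ (p, q) := by
    intro a b hab hne
    simp only [ne_eq, Prod.mk.injEq, not_and, Equiv.swap_apply_def, Fin.ext_iff, Fin.lt_def] at *
    split_ifs <;> omega
  refine Finset.card_bij' (fun x _ => (swap p q x.1, swap p q x.2))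
    (fun x _ => (swap p q x.1, swap p q x.2)) ?_ ?_ ?_ ?_
  · rintro ⟨a, b⟩ h
    simp only [Finset.mem_erase, Finset.mem_filter, Finset.mem_univ, true_and] at h ⊢
    have := key a b h.2.1 h.1
    exact ⟨this.2, this.1, h.2.2⟩
  · rintro ⟨a, b⟩ h
    simp only [Finset.mem_erase, Finset.mem_filter, Finset.mem_univ, true_and] at h ⊢
    have := key a b h.2.1 h.1
    refine ⟨this.2, this.1, ?_⟩
    simpa using h.2.2
  · rintro ⟨a, b⟩ h; simp
  · rintro ⟨a, b⟩ h; simp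

lemma invCount_mul_swap_of_lt (u : Equiv.Perm (Fin n)) {p q : Fin n} (hpq : (q : ℕ) = p + 1)
    (h : u p < u q) : invCount (u * swap p q) = invCount u + 1 := by
  have h1 := invCount_erase u hpq
  have hlt : p < q := by rw [Fin.lt_def]; omega
  rw [Finset.card_erase_of_mem (Finset.mem_filter.2 ⟨Finset.mem_univ _, hlt, by simpa using h⟩),
    Finset.erase_eq_of_notMem (a := (p, q)) (by simp [hlt, h.le])] at h1
  have h2 : 0 < invCount (u * swap p q) :=
    Finset.card_pos.2 ⟨(p, q), Finset.mem_filter.2 ⟨Finset.mem_univ _, hlt, by simpa using h⟩⟩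
  unfold invCount at h2 ⊢
  omega

lemma invCount_mul_swap_of_gt (u : Equiv.Perm (Fin n)) {p q : Fin n} (hpq : (q : ℕ) = p + 1)
    (h : u q < u p) : invCount (u * swap p q) + 1 = invCount u := by
  have := invCount_mul_swap_of_lt (u * swap p q) hpq (by simpa using h)
  rw [mul_assoc, Equiv.swap_mul_self, mul_one] at this
  exact this.symm

lemma adjSwap_eq {p q : Fin n} (hpq : (q : ℕ) = p + 1) :
    (adjSwap (q : ℕ) : Equiv.Perm (Fin n)) = swap p q := by
  have h : 1 ≤ (q : ℕ) ∧ (q : ℕ) < n := ⟨by omega, q.2⟩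
  rw [adjSwap, dif_pos h]
  congr 1
  ext; simp; omega

lemma adjSwap_cases (l : ℕ) : (adjSwap l : Equiv.Perm (Fin n)) = 1 ∨
    ∃ p q : Fin n, (q : ℕ) = p + 1 ∧ l = q ∧ (adjSwap l : Equiv.Perm (Fin n)) = swap p q := by
  by_cases h : 1 ≤ l ∧ l < n
  · right
    have hq : ((⟨l, h.2⟩ : Fin n) : ℕ) = (⟨l - 1, by omega⟩ : Fin n) + 1 := by simp; omega
    exact ⟨_, _, hq, rfl, adjSwap_eq hq⟩
  · left; rw [adjSwap, dif_neg h]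

lemma swap_val_lt_or (u : Equiv.Perm (Fin n)) {p q : Fin n} (hpq : (q : ℕ) = p + 1) :
    u p < u q ∨ u q < u p := by
  rcases lt_trichotomy (u p) (u q) with h | h | h
  · exact Or.inl h
  · have := u.injective h
    rw [this] at hpq; omega
  · exact Or.inr h

lemma invCount_mul_adjSwap_le (u : Equiv.Perm (Fin n)) (l : ℕ) :
    invCount (u * adjSwap l) ≤ invCount u + 1 := by
  rcases adjSwap_cases (n := n) l with h | ⟨p, q, hpq, -, h⟩
  · rw [h, mul_one]; omega
  · rw [h]
    rcases swap_val_lt_or u hpq with h' | h'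
    · rw [invCount_mul_swap_of_lt u hpq h']
    · have := invCount_mul_swap_of_gt u hpq h'
      omega

lemma invCount_one : invCount (1 : Equiv.Perm (Fin n)) = 0 := by
  rw [invCount, Finset.card_eq_zero, Finset.filter_eq_empty_iff]
  rintro ⟨a, b⟩ -
  simpa using fun h : a < b => h.le

/-- Multiplying by a word of `m` letters raises the length by at most `m`. -/
lemma invCount_mul_prod_le {α : Type*} (f : α → ℕ) (L : List α) (u : Equiv.Perm (Fin n)) :
    invCount (u * (L.map (fun b => (adjSwap (f b) : Equiv.Perm (Fin n)))).prod)
      ≤ invCount u + L.length := by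
  induction L generalizing u with
  | nil => simp
  | cons a l ih =>
    have h1 := ih (u * adjSwap (f a))
    have h2 := invCount_mul_adjSwap_le u (f a)
    simp only [List.map_cons, List.prod_cons, List.length_cons, ← mul_assoc]
    omega

lemma invCount_demazure_le (v : Equiv.Perm (Fin n)) (L : List (ℕ × ℕ)) (u : Equiv.Perm (Fin n)) :
    invCount (L.foldl (demStep v) u) ≤ invCount u + L.length := by
  induction L generalizing u with
  | nil => simp
  | cons a l ih =>
    have h1 := ih (demStep v u a)
    have h2 : invCount (demStep v u a) ≤ invCount u + 1 := by
      unfold demStep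
      split_ifs
      · exact invCount_mul_adjSwap_le u _
      · omega
    simp only [List.foldl_cons, List.length_cons]
    omega

/-- When no letter of a word is wasted, the Demazure product is the ordinary product. -/
lemma foldl_demStep_eq_iff (v : Equiv.Perm (Fin n)) (L : List (ℕ × ℕ)) (u x : Equiv.Perm (Fin n))
    (hx : invCount x = invCount u + L.length) :
    L.foldl (demStep v) u = x ↔
      u * (L.map (fun b => (adjSwap (canonLabel v b) : Equiv.Perm (Fin n)))).prod = x := by
  induction L generalizing u with
  | nil => simp
  | cons a l ih =>
    simp only [List.map_cons, List.prod_cons, List.length_cons, List.foldl_cons, ← mul_assoc]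
      at hx ⊢
    have h2 := invCount_mul_adjSwap_le u (canonLabel v a)
    by_cases h : invCount u < invCount (u * adjSwap (canonLabel v a))
    · rw [demStep, if_pos h]
      exact ih _ (by omega)
    · rw [demStep, if_neg h]
      constructor
      · rintro rfl
        have := invCount_demazure_le v l u
        omega
      · rintro rfl
        have := invCount_mul_prod_le (canonLabel v) l (u * adjSwap (canonLabel v a))
        omega

/-- The exchange property: if `x` is the product of a word and `x` has a descent at `p`, then
`x * s_p` is the product of the word with one letter removed.  The word need not be reduced:
following the images of `p` and `q` through the word from the right, the removed letter is one
that interchanges them. -/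
lemma exchange {α : Type*} [BEq α] [LawfulBEq α] (f : α → ℕ) (L : List α) {p q : Fin n}
    (hpq : (q : ℕ) = p + 1)
    (h : (L.map (fun b => (adjSwap (f b) : Equiv.Perm (Fin n)))).prod q <
      (L.map (fun b => (adjSwap (f b) : Equiv.Perm (Fin n)))).prod p) (hL : L.Nodup) :
    ∃ b ∈ L, ((L.erase b).map (fun b => (adjSwap (f b) : Equiv.Perm (Fin n)))).prod =
      (L.map (fun b => (adjSwap (f b) : Equiv.Perm (Fin n)))).prod * swap p q := by
  induction L with
  | nil =>
    simp only [List.map_nil, List.prod_nil, Equiv.Perm.one_apply, Fin.lt_def] at h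
    omega
  | cons a l ih =>
    simp only [List.map_cons, List.prod_cons, List.nodup_cons] at h hL ⊢
    set y := (l.map (fun b => (adjSwap (f b) : Equiv.Perm (Fin n)))).prod with hy
    rcases swap_val_lt_or y hpq with h' | h'
    · refine ⟨a, by simp, ?_⟩
      rw [List.erase_cons_head, ← hy]
      rcases adjSwap_cases (n := n) (f a) with h1 | ⟨c, d, hcd, -, h1⟩
      · rw [h1] at h
        exact absurd h (by simpa using h'.le)
      · rw [h1, Equiv.Perm.mul_apply, Equiv.Perm.mul_apply] at h
        -- the letter `a` inverts the order of `y p < y q`, so these are the values it swaps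
        have hp : y p = c ∧ y q = d := by
          simp only [Equiv.swap_apply_def, Fin.lt_def, Fin.ext_iff] at h h' ⊢
          split_ifs at h <;> omega
        rw [h1, ← hp.1, ← hp.2, mul_assoc, Equiv.mul_swap_eq_swap_mul, ← mul_assoc,
          Equiv.swap_mul_self, one_mul]
    · obtain ⟨b, hb, hb'⟩ := ih h' hL.2
      refine ⟨b, by simp [hb], ?_⟩
      have hab : a ≠ b := by rintro rfl; exact hL.1 hb
      rw [List.erase_cons_tail (by simpa using hab), List.map_cons, List.prod_cons, hb', mul_assoc]

/-! ### The reading order -/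

/-- The strict reading order on boxes: rows from top to bottom, left to right in each row. -/
def readsBefore (a b : ℕ × ℕ) : Prop := b.1 < a.1 ∨ (a.1 = b.1 ∧ a.2 < b.2)

/-- All boxes of the `n × n` grid in reading order. -/
def gridList (n : ℕ) : List (ℕ × ℕ) :=
  ((List.range n).reverse).flatMap (fun i => (List.range n).map (fun j => (i, j)))

lemma readingList_eq (P : Finset (ℕ × ℕ)) :
    readingList n P = (gridList n).filter (fun b => decide (b ∈ P)) := by
  rw [readingList, gridList, List.filter_flatMap]
  congr 1
  funext i
  rw [List.filter_map]
  rfl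

lemma mem_gridList {b : ℕ × ℕ} : b ∈ gridList n ↔ b.1 < n ∧ b.2 < n := by
  obtain ⟨a, c⟩ := b
  simp [gridList]

lemma pairwise_gridList : (gridList n).Pairwise readsBefore := by
  rw [gridList, List.pairwise_flatMap]
  constructor
  · intro i _
    rw [List.pairwise_map]
    exact List.pairwise_lt_range.imp (fun h => Or.inr ⟨rfl, h⟩)
  · rw [List.pairwise_reverse]
    refine List.pairwise_lt_range.imp ?_
    intro a b hab x hx y hy
    simp only [List.mem_map] at hx hy
    obtain ⟨_, _, rfl⟩ := hx
    obtain ⟨_, _, rfl⟩ := hy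
    exact Or.inl hab

lemma readsBefore_asymm {a b : ℕ × ℕ} (h : readsBefore a b) : ¬ readsBefore b a := by
  unfold readsBefore at *; omega

lemma readsBefore_ne {a b : ℕ × ℕ} (h : readsBefore a b) : a ≠ b := by
  rintro rfl; exact readsBefore_asymm h h

lemma pairwise_readingList (P : Finset (ℕ × ℕ)) : (readingList n P).Pairwise readsBefore := by
  rw [readingList_eq]; exact pairwise_gridList.filter _

lemma nodup_readingList (P : Finset (ℕ × ℕ)) : (readingList n P).Nodup :=
  (pairwise_readingList P).imp readsBefore_ne

lemma mem_readingList {P : Finset (ℕ × ℕ)} {b : ℕ × ℕ} :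
    b ∈ readingList n P ↔ b ∈ P ∧ b.1 < n ∧ b.2 < n := by
  rw [readingList_eq, List.mem_filter, mem_gridList]; simp [and_comm]

lemma readingList_erase (P : Finset (ℕ × ℕ)) (b : ℕ × ℕ) :
    readingList n (P.erase b) = (readingList n P).erase b := by
  rw [(nodup_readingList P).erase_eq_filter, readingList_eq, readingList_eq, List.filter_filter]
  congr 1
  funext a
  by_cases h : a = b <;> simp [h]

lemma length_readingList {P : Finset (ℕ × ℕ)} (hP : ∀ b ∈ P, b.1 < n ∧ b.2 < n) :
    (readingList n P).length = P.card := by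
  have : (readingList n P).toFinset = P := by
    ext b
    rw [List.mem_toFinset, mem_readingList]
    exact ⟨fun h => h.1, fun h => ⟨h, hP b h⟩⟩
  rw [← List.toFinset_card_of_nodup (nodup_readingList P), this]

/-- Two lists in reading order with the same boxes are equal. -/
lemma eq_of_readsBefore {L M : List (ℕ × ℕ)} (hL : L.Pairwise readsBefore)
    (hM : M.Pairwise readsBefore) (h : ∀ b, b ∈ L ↔ b ∈ M) : L = M := by
  have hp : L.Perm M :=
    (List.perm_ext_iff_of_nodup (hL.imp readsBefore_ne) (hM.imp readsBefore_ne)).2 h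
  exact hp.eq_of_pairwise (fun a b _ _ h1 h2 => absurd h2 (readsBefore_asymm h1)) hL hM

/-! ### Subwords of the word of a Rothe diagram -/

/-- The ordinary product of the letters `s_ℓ` of the boxes of `P` in reading order. -/
def wordProd (v : Equiv.Perm (Fin n)) (P : Finset (ℕ × ℕ)) : Equiv.Perm (Fin n) :=
  ((readingList n P).map (fun b => (adjSwap (canonLabel v b) : Equiv.Perm (Fin n)))).prod

/-- The set of boxes `S` contains a reduced word for `x`. -/
def HasWord (v : Equiv.Perm (Fin n)) (S : Finset (ℕ × ℕ)) (x : Equiv.Perm (Fin n)) : Prop :=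
  ∃ P ⊆ S, wordProd v P = x ∧ P.card = invCount x

/-- The box in the column of position `j` and the row of the value `v k`. -/
def box (v : Equiv.Perm (Fin n)) (j k : Fin n) : ℕ × ℕ := (n - 1 - (v k : ℕ), j)

lemma permVal_fin (v : Equiv.Perm (Fin n)) (j : Fin n) : permVal v j = v j := by
  simp [permVal]

lemma permVal_of_lt (v : Equiv.Perm (Fin n)) {j : ℕ} (h : j < n) : permVal v j = v ⟨j, h⟩ := by
  simp [permVal, h]

/-- Boxes of the Rothe diagram correspond to the non-inversions of `v`. -/
lemma mem_Rothe (v : Equiv.Perm (Fin n)) (b : ℕ × ℕ) :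
    b ∈ Rothe v ↔ ∃ j k : Fin n, j < k ∧ v j < v k ∧ b = box v j k := by
  obtain ⟨a, c⟩ := b
  simp only [Rothe, Finset.mem_filter, Finset.mem_product, Finset.mem_range, box, Prod.mk.injEq]
  constructor
  · rintro ⟨⟨ha, hc⟩, h1, h2⟩
    have hy : n - 1 - a < n := by omega
    rw [permVal_of_lt _ hc] at h1
    rw [permVal_of_lt _ hy] at h2
    refine ⟨⟨c, hc⟩, v.symm ⟨n - 1 - a, hy⟩, h2, ?_, ?_, rfl⟩
    · rw [Fin.lt_def, Equiv.apply_symm_apply]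
      simp only; omega
    · rw [Equiv.apply_symm_apply]
      simp only; omega
  · rintro ⟨j, k, hjk, hv, rfl, rfl⟩
    have hk := (v k).2
    have hy : n - 1 - (n - 1 - (v k : ℕ)) < n := by omega
    rw [permVal_fin, permVal_of_lt _ hy]
    have : (⟨n - 1 - (n - 1 - (v k : ℕ)), hy⟩ : Fin n) = v k := by
      ext; simp only; omega
    rw [this, Equiv.symm_apply_apply]
    rw [Fin.lt_def] at hjk hv
    exact ⟨⟨by omega, j.2⟩, by omega, hjk⟩

lemma Rothe_bound {v : Equiv.Perm (Fin n)} {b : ℕ × ℕ} (h : b ∈ Rothe v) : b.1 < n ∧ b.2 < n := by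
  simp only [Rothe, Finset.mem_filter, Finset.mem_product, Finset.mem_range] at h
  exact h.1

lemma box_inj (v : Equiv.Perm (Fin n)) {j k j' k' : Fin n} (h : box v j k = box v j' k') :
    j = j' ∧ k = k' := by
  simp only [box, Prod.mk.injEq] at h
  have h1 := (v k).2
  have h2 := (v k').2
  exact ⟨Fin.ext h.2, v.injective (Fin.ext (by omega))⟩

lemma card_filter_lt_val (v : Equiv.Perm (Fin n)) (y : Fin n) :
    ((Finset.univ : Finset (Fin n)).filter (fun m => y < v m)).card = n - 1 - y := by
  have : (Finset.univ : Finset (Fin n)).filter (fun m => y < v m) =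
      (Finset.Ioi y).map v.symm.toEmbedding := by
    ext m
    simp
  rw [this, Finset.card_map, Fin.card_Ioi]

/-- The canonical label of the box of a non-inversion `(j, k)` counts the positions whose value
exceeds `v k`, together with the positions weakly left of `j` whose value is below `v k`. -/
lemma canonLabel_box (v : Equiv.Perm (Fin n)) {j k : Fin n} (hjk : j < k) :
    canonLabel v (box v j k) = ((Finset.univ : Finset (Fin n)).filter
      (fun m => v k < v m ∨ (m ≤ j ∧ v m < v k))).card := by
  rw [Finset.filter_or, Finset.card_union_of_disjoint, card_filter_lt_val, canonLabel]
  · congr 1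
    symm
    refine Finset.card_bij (fun m _ => box v m k) ?_ ?_ ?_
    · intro m hm
      simp only [Finset.mem_filter, Finset.mem_univ, true_and] at hm ⊢
      exact ⟨(mem_Rothe v _).2 ⟨m, k, lt_of_le_of_lt hm.1 hjk, hm.2, rfl⟩, rfl, hm.1⟩
    · intro m _ m' _ h
      exact (box_inj v h).1
    · intro b hb
      simp only [Finset.mem_filter, mem_Rothe] at hb
      obtain ⟨⟨a, c, hac, hv, rfl⟩, h1, h2⟩ := hb
      have hck : c = k := by
        have e1 := (v c).2
        have e2 := (v k).2
        simp only [box] at h1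
        exact v.injective (Fin.ext (by omega))
      subst hck
      exact ⟨a, by simpa using ⟨h2, hv⟩, rfl⟩
  · rw [Finset.disjoint_filter]
    intro m _ h h'
    exact absurd h (not_lt.2 h'.2.le)

/-- Reduced pipe dreams, with the Demazure product replaced by the ordinary product. -/
lemma mem_RedPipes (v x : Equiv.Perm (Fin n)) (P : Finset (ℕ × ℕ)) :
    P ∈ RedPipes v x ↔ P ⊆ Rothe v ∧ wordProd v P = x ∧ P.card = invCount x := by
  simp only [RedPipes, Pipes, Finset.mem_filter, Finset.mem_powerset, and_assoc]
  refine and_congr_right fun hP => and_congr_left fun hc => ?_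
  rw [demazure, foldl_demStep_eq_iff, one_mul, wordProd]
  rw [invCount_one, length_readingList (fun b hb => Rothe_bound (hP hb)), hc, zero_add]

lemma isFace_iff (v w : Equiv.Perm (Fin n)) (F : Finset (ℕ × ℕ)) :
    IsFace v w F ↔ F ⊆ Rothe v ∧ HasWord v (Rothe v \ F) (longest * w) := by
  refine and_congr_right fun _ => ?_
  constructor
  · rintro ⟨P, hP, h⟩
    exact ⟨P, h, ((mem_RedPipes _ _ _).1 hP).2⟩
  · rintro ⟨P, h, hP⟩
    exact ⟨P, (mem_RedPipes _ _ _).2 ⟨h.trans Finset.sdiff_subset, hP⟩, h⟩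
lemma wordProd_exchange (v : Equiv.Perm (Fin n)) (P : Finset (ℕ × ℕ)) {p q : Fin n}
    (hpq : (q : ℕ) = p + 1) (h : wordProd v P q < wordProd v P p) :
    ∃ b ∈ P, wordProd v (P.erase b) = wordProd v P * swap p q := by
  obtain ⟨b, hb, h'⟩ := exchange (canonLabel v) (readingList n P) hpq h (nodup_readingList P)
  exact ⟨b, (mem_readingList.1 hb).1, by rw [wordProd, readingList_erase, h', wordProd]⟩

lemma invCount_wordProd_le (v : Equiv.Perm (Fin n)) {P : Finset (ℕ × ℕ)} (hP : P ⊆ Rothe v) :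
    invCount (wordProd v P) ≤ P.card := by
  have := invCount_mul_prod_le (canonLabel v) (readingList n P) (1 : Equiv.Perm (Fin n))
  rwa [invCount_one, one_mul, zero_add,
    length_readingList (fun b hb => Rothe_bound (hP hb))] at this

/-! ### The last ascent -/

/-- Positions `p` and `q = p + 1` form the last ascent of `v`; the absence of
later ascents is recorded as `v` being decreasing from `q` on. -/
structure LastAsc (v : Equiv.Perm (Fin n)) (p q : Fin n) : Prop where
  succ : (q : ℕ) = p + 1
  lt : v p < v q
  decr : ∀ j k, q ≤ j → j < k → v k < v j

section LastAscent

variable {v : Equiv.Perm (Fin n)} {p q : Fin n}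

lemma LastAsc.p_lt_q (h : LastAsc v p q) : p < q := by
  have := h.succ
  rw [Fin.lt_def]; omega

lemma LastAsc.after (h : LastAsc v p q) (k : Fin n) (hk : q < k) : v k < v q :=
  h.decr q k le_rfl hk

lemma LastAsc.z_mem (h : LastAsc v p q) : box v p q ∈ Rothe v :=
  (mem_Rothe v _).2 ⟨p, q, h.p_lt_q, h.lt, rfl⟩

/-- The last box carries the label of the ascent. -/
lemma LastAsc.canonLabel_z (h : LastAsc v p q) : canonLabel v (box v p q) = q := by
  rw [canonLabel_box v h.p_lt_q, h.succ]
  have : (Finset.univ : Finset (Fin n)).filter (fun m => v q < v m ∨ (m ≤ p ∧ v m < v q)) =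
      Finset.Iic p := by
    ext m
    simp only [Finset.mem_filter, Finset.mem_univ, true_and, Finset.mem_Iic]
    constructor
    · rintro (hm | hm)
      · by_contra hc
        rcases lt_trichotomy q m with h1 | h1 | h1
        · exact absurd (h.after m h1) (not_lt.2 hm.le)
        · rw [h1] at hm; exact lt_irrefl _ hm
        · have := h.succ
          rw [Fin.lt_def] at h1
          rw [Fin.le_def] at hc
          omega
      · exact hm.1
    · intro hm
      rcases lt_trichotomy (v q) (v m) with h1 | h1 | h1
      · exact Or.inl h1
      · have := v.injective h1
        subst this
        exact absurd hm (not_le.2 h.p_lt_q)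
      · exact Or.inr ⟨hm, h1⟩
  rw [this, Fin.card_Iic]

/-- A box read after the last box has a label that commutes with the label of the ascent. -/
lemma LastAsc.canonLabel_after (h : LastAsc v p q) {b : ℕ × ℕ} (hb : b ∈ Rothe v)
    (hz : readsBefore (box v p q) b) : canonLabel v b + 1 ≤ p := by
  obtain ⟨j, k, hjk, hv, rfl⟩ := (mem_Rothe v b).1 hb
  have hp := h.p_lt_q
  have key : v q < v k ∨ (k = q ∧ p < j) := by
    have e1 := (v k).2
    have e2 := (v q).2
    rcases hz with h1 | ⟨h1, h2⟩
    · left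
      simp only [box] at h1
      rw [Fin.lt_def]; omega
    · right
      simp only [box] at h1 h2
      exact ⟨v.injective (Fin.ext (by omega)), h2⟩
  have hs := h.succ
  have before : ∀ m, v q < v m → m < p := by
    intro m hm
    have h1 : ¬ q < m := fun hc => absurd (h.after m hc) (not_lt.2 hm.le)
    have h2 : m ≠ q := by rintro rfl; exact lt_irrefl _ hm
    have h3 : m ≠ p := by rintro rfl; exact absurd h.lt (not_lt.2 hm.le)
    simp only [Fin.lt_def, ne_eq, Fin.ext_iff] at *
    omega
  rcases key with hk | ⟨rfl, hj⟩
  · rw [canonLabel_box v hjk]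
    have hkp := before k hk
    have hsub : (Finset.univ : Finset (Fin n)).filter
        (fun m => v k < v m ∨ (m ≤ j ∧ v m < v k)) ⊆ (Finset.Iio p).erase k := by
      intro m hm
      simp only [Finset.mem_filter, Finset.mem_univ, true_and] at hm
      rw [Finset.mem_erase, Finset.mem_Iio]
      rcases hm with hm | hm
      · exact ⟨by rintro rfl; exact lt_irrefl _ hm, before m (hk.trans hm)⟩
      · have : m < k := lt_of_le_of_lt hm.1 hjk
        exact ⟨this.ne, this.trans hkp⟩
    have := Finset.card_le_card hsub
    rw [Finset.card_erase_of_mem (Finset.mem_Iio.2 hkp), Fin.card_Iio] at this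
    rw [Fin.lt_def] at hkp
    omega
  · rw [Fin.lt_def] at hjk hj
    omega

lemma adjSwap_comm {l : ℕ} (hpq : (q : ℕ) = p + 1) (hl : l + 1 ≤ p) :
    (adjSwap l : Equiv.Perm (Fin n)) * swap p q = swap p q * adjSwap l := by
  rcases adjSwap_cases (n := n) l with h | ⟨c, d, hcd, hld, h⟩
  · rw [h, one_mul, mul_one]
  · rw [h]
    rw [Equiv.mul_swap_eq_swap_mul, Equiv.swap_apply_of_ne_of_ne, Equiv.swap_apply_of_ne_of_ne] <;>
      · rw [ne_eq, Fin.ext_iff]; omega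

/-- Including the last box multiplies the product of the word by `s_p` on the right. -/
lemma LastAsc.wordProd_insert (h : LastAsc v p q) {P : Finset (ℕ × ℕ)}
    (hP : P ⊆ (Rothe v).erase (box v p q)) :
    wordProd v (insert (box v p q) P) = wordProd v P * swap p q := by
  set z := box v p q with hz
  have hzP : z ∉ P := fun hc => (Finset.mem_erase.1 (hP hc)).1 rfl
  obtain ⟨g1, g2, hg⟩ := List.append_of_mem (mem_gridList.2 (Rothe_bound h.z_mem))
  have hpw := pairwise_gridList (n := n)
  rw [hg, List.pairwise_append, List.pairwise_cons] at hpw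
  obtain ⟨-, ⟨hz2, -⟩, hz1⟩ := hpw
  have e1 : g1.filter (fun b => decide (b ∈ insert z P)) = g1.filter (fun b => decide (b ∈ P)) := by
    refine List.filter_congr fun b hb => ?_
    have : b ≠ z := readsBefore_ne (hz1 b hb z (by simp [hz]))
    simp [this]
  have e2 : g2.filter (fun b => decide (b ∈ insert z P)) = g2.filter (fun b => decide (b ∈ P)) := by
    refine List.filter_congr fun b hb => ?_
    have : b ≠ z := (readsBefore_ne (hz2 b hb)).symm
    simp [this]
  have comm : ∀ L : List (ℕ × ℕ), (∀ b ∈ L, canonLabel v b + 1 ≤ p) →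
      swap p q * (L.map (fun b => (adjSwap (canonLabel v b) : Equiv.Perm (Fin n)))).prod =
      (L.map (fun b => (adjSwap (canonLabel v b) : Equiv.Perm (Fin n)))).prod * swap p q := by
    intro L
    induction L with
    | nil => simp
    | cons a l ih =>
      intro hL
      simp only [List.map_cons, List.prod_cons]
      rw [← mul_assoc, ← adjSwap_comm h.succ (hL a (by simp)), mul_assoc, mul_assoc,
        ih (fun b hb => hL b (by simp [hb]))]
  have e3 := comm (g2.filter (fun b => decide (b ∈ P))) (by
    intro b hb
    rw [List.mem_filter] at hb
    exact h.canonLabel_after (Finset.mem_of_mem_erase (hP (by simpa using hb.2))) (hz2 b hb.1))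
  rw [wordProd, wordProd, readingList_eq, readingList_eq, hg, List.filter_append,
    List.filter_append, List.filter_cons_of_pos (by simp [hz]), List.filter_cons_of_neg (by
      simpa [hz] using hzP), e1, e2, List.map_append, List.map_append, List.map_cons,
    List.prod_append, List.prod_append, List.prod_cons, mul_assoc, ← e3, h.canonLabel_z,
    adjSwap_eq h.succ]

/-- If `x` ascends at `p`, a reduced word for `x` cannot use the last box. -/
lemma LastAsc.hasWord_insert_of_lt (h : LastAsc v p q) {S : Finset (ℕ × ℕ)}
    (hS : S ⊆ (Rothe v).erase (box v p q)) {x : Equiv.Perm (Fin n)} (hx : x p < x q) :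
    HasWord v (insert (box v p q) S) x ↔ HasWord v S x := by
  constructor
  · rintro ⟨P, hP, h1, h2⟩
    by_cases hz : box v p q ∈ P
    · exfalso
      have hsub : P.erase (box v p q) ⊆ S := by
        rwa [← Finset.subset_insert_iff]
      have h3 := h.wordProd_insert (hsub.trans hS)
      rw [Finset.insert_erase hz, h1] at h3
      have h4 : wordProd v (P.erase (box v p q)) = x * swap p q := by
        rw [h3, mul_assoc, Equiv.swap_mul_self, mul_one]
      have h5 := invCount_wordProd_le v
        ((hsub.trans hS).trans (Finset.erase_subset _ _))
      rw [h4, invCount_mul_swap_of_lt x h.succ hx, Finset.card_erase_of_mem hz] at h5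
      omega
    · exact ⟨P, (Finset.subset_insert_iff_of_notMem hz).1 hP, h1, h2⟩
  · rintro ⟨P, hP, h1⟩
    exact ⟨P, hP.trans (Finset.subset_insert _ _), h1⟩

/-- If `x` descends at `p`, reduced words for `x` either use the last box, or yield one for
`x * s_p` by the exchange property. -/
lemma LastAsc.hasWord_insert_of_gt (h : LastAsc v p q) {S : Finset (ℕ × ℕ)}
    (hS : S ⊆ (Rothe v).erase (box v p q)) {x : Equiv.Perm (Fin n)} (hx : x q < x p) :
    HasWord v (insert (box v p q) S) x ↔ HasWord v S (x * swap p q) := by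
  have hlen := invCount_mul_swap_of_gt x h.succ hx
  constructor
  · rintro ⟨P, hP, h1, h2⟩
    by_cases hz : box v p q ∈ P
    · have hsub : P.erase (box v p q) ⊆ S := by
        rwa [← Finset.subset_insert_iff]
      have h3 := h.wordProd_insert (hsub.trans hS)
      rw [Finset.insert_erase hz, h1] at h3
      refine ⟨_, hsub, ?_, ?_⟩
      · rw [h3, mul_assoc, Equiv.swap_mul_self, mul_one]
      · rw [Finset.card_erase_of_mem hz]; omega
    · subst h1
      obtain ⟨b, hb, hb'⟩ := wordProd_exchange v P h.succ hx
      refine ⟨P.erase b, (Finset.erase_subset _ _).trans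
        ((Finset.subset_insert_iff_of_notMem hz).1 hP), hb', ?_⟩
      rw [Finset.card_erase_of_mem hb]; omega
  · rintro ⟨P, hP, h1, h2⟩
    have hz : box v p q ∉ P := fun hc => (Finset.mem_erase.1 (hS (hP hc))).1 rfl
    refine ⟨insert (box v p q) P, Finset.insert_subset_insert _ hP, ?_, ?_⟩
    · rw [h.wordProd_insert (hP.trans hS), h1, mul_assoc, Equiv.swap_mul_self, mul_one]
    · rw [Finset.card_insert_of_notMem hz, h2, hlen]

/-! ### Passing from `v` to `v * s_p` -/

/-- Interchange of the columns `p` and `q`.  On the diagram of `v` with the last box removed this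
is the relabeling `phiMap`, as column `q` is empty there. -/
def colSwap (p q : Fin n) : (ℕ × ℕ) ≃ (ℕ × ℕ) :=
  Equiv.prodCongr (Equiv.refl ℕ) (swap (p : ℕ) (q : ℕ))

lemma swap_coe (p q j : Fin n) : swap (p : ℕ) (q : ℕ) (j : ℕ) = (swap p q j : Fin n) := by
  simp only [Equiv.swap_apply_def, Fin.ext_iff]
  split_ifs <;> rfl

lemma colSwap_box (v : Equiv.Perm (Fin n)) (p q j k : Fin n) :
    colSwap p q (box v j k) = box (v * swap p q) (swap p q j) (swap p q k) := by
  simp [colSwap, box, swap_coe]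

lemma mem_Rothe_erase (v : Equiv.Perm (Fin n)) (p q : Fin n) (b : ℕ × ℕ) :
    b ∈ (Rothe v).erase (box v p q) ↔
      ∃ j k : Fin n, j < k ∧ v j < v k ∧ (j, k) ≠ (p, q) ∧ b = box v j k := by
  rw [Finset.mem_erase, mem_Rothe]
  constructor
  · rintro ⟨h, j, k, h1, h2, rfl⟩
    refine ⟨j, k, h1, h2, ?_, rfl⟩
    rintro ⟨⟩
    exact h rfl
  · rintro ⟨j, k, h1, h2, h3, rfl⟩
    refine ⟨fun hc => h3 ?_, j, k, h1, h2, rfl⟩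
    obtain ⟨rfl, rfl⟩ := box_inj v hc
    rfl

lemma swap_lt_swap (hpq : (q : ℕ) = p + 1) {a b : Fin n} (hab : a < b)
    (hne : (a, b) ≠ (p, q)) : swap p q a < swap p q b := by
  simp only [ne_eq, Prod.mk.injEq, not_and, Equiv.swap_apply_def, Fin.ext_iff, Fin.lt_def] at *
  split_ifs <;> omega

/-- The diagram of `v * s_p` is that of `v` without its last box, with column `p` moved to `q`. -/
lemma LastAsc.Rothe_mul_swap (h : LastAsc v p q) :
    Rothe (v * swap p q) = ((Rothe v).erase (box v p q)).image (colSwap p q) := by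
  ext b
  simp only [Finset.mem_image, mem_Rothe_erase]
  rw [mem_Rothe]
  constructor
  · rintro ⟨j, k, hjk, hv, rfl⟩
    have hne : (j, k) ≠ (p, q) := by
      rintro ⟨⟩
      simp only [Equiv.Perm.mul_apply, Equiv.swap_apply_left, Equiv.swap_apply_right] at hv
      exact absurd hv (not_lt.2 h.lt.le)
    refine ⟨box v (swap p q j) (swap p q k), ⟨_, _, swap_lt_swap h.succ hjk hne, hv, ?_, rfl⟩, ?_⟩
    · intro hc
      simp only [Prod.mk.injEq] at hc
      have h1 := congrArg (swap p q) hc.1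
      have h2 := congrArg (swap p q) hc.2
      simp only [Equiv.swap_apply_self, Equiv.swap_apply_left, Equiv.swap_apply_right] at h1 h2
      rw [h1, h2] at hjk
      exact absurd hjk (not_lt.2 h.p_lt_q.le)
    · rw [colSwap_box, Equiv.swap_apply_self, Equiv.swap_apply_self]
  · rintro ⟨_, ⟨j, k, hjk, hv, hne, rfl⟩, rfl⟩
    refine ⟨_, _, swap_lt_swap h.succ hjk hne, ?_, colSwap_box v p q j k⟩
    simpa using hv

/-- The boxes of the diagram lie in columns up to `p`. -/
lemma LastAsc.col_le (h : LastAsc v p q) {j k : Fin n} (hjk : j < k)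
    (hv : v j < v k) : j ≤ p := by
  by_contra hc
  have := h.decr j k (by
    have := h.succ
    rw [Fin.le_def] at *
    omega) hjk
  exact absurd hv (not_lt.2 this.le)

/-- Moving column `p` to column `q` preserves the canonical labels. -/
lemma LastAsc.canonLabel_colSwap (h : LastAsc v p q)
    {b : ℕ × ℕ}
    (hb : b ∈ (Rothe v).erase (box v p q)) :
    canonLabel (v * swap p q) (colSwap p q b) = canonLabel v b := by
  obtain ⟨j, k, hjk, hv, hne, rfl⟩ := (mem_Rothe_erase v p q b).1 hb
  rw [colSwap_box, canonLabel_box _ (swap_lt_swap h.succ hjk hne), canonLabel_box _ hjk]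
  simp only [Equiv.Perm.mul_apply, Equiv.swap_apply_self]
  refine Finset.card_equiv (swap p q) fun m => ?_
  simp only [Finset.mem_filter, Finset.mem_univ, true_and]
  refine or_congr_right (and_congr_left fun hm => ?_)
  have hj := h.col_le hjk hv
  have hs := h.succ
  set m' := swap p q m with hm'
  have : m = swap p q m' := by rw [hm', Equiv.swap_apply_self]
  rw [this]
  by_cases hjp : j = p
  · -- column `p` moves to `q`, and `m' = q` is excluded because `k` lies after `q`
    have hqk : q < k := by
      have : k ≠ q := by rintro rfl; exact hne (by rw [hjp])
      rw [hjp] at hjk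
      simp only [Fin.lt_def, ne_eq, Fin.ext_iff] at *
      omega
    have hmq : m' ≠ q := by
      intro hc
      rw [hc] at hm
      exact absurd (h.after k hqk) (not_lt.2 hm.le)
    clear_value m'
    subst hjp
    simp only [Equiv.swap_apply_def, Fin.le_def, Fin.ext_iff, ne_eq] at *
    split_ifs <;> omega
  · clear_value m'
    simp only [Equiv.swap_apply_def, Fin.le_def, Fin.ext_iff, ne_eq] at *
    split_ifs <;> omega

/-- Moving column `p` to column `q` preserves the reading order, column `q` being empty. -/
lemma LastAsc.readingList_image (h : LastAsc v p q)
    {P : Finset (ℕ × ℕ)}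
    (hP : P ⊆ (Rothe v).erase (box v p q)) :
    readingList n (P.image (colSwap p q)) = (readingList n P).map (colSwap p q) := by
  refine eq_of_readsBefore (pairwise_readingList _) ?_ ?_
  · rw [List.pairwise_map]
    refine (pairwise_readingList P).imp_of_mem ?_
    intro a b ha hb hab
    obtain ⟨j, k, hjk, hv, -, rfl⟩ := (mem_Rothe_erase v p q a).1 (hP (mem_readingList.1 ha).1)
    obtain ⟨j', k', hjk', hv', -, rfl⟩ := (mem_Rothe_erase v p q b).1 (hP (mem_readingList.1 hb).1)
    have h1 := h.col_le hjk hv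
    have h2 := h.col_le hjk' hv'
    have hs := h.succ
    rcases hab with hab | ⟨hab, hab'⟩
    · exact Or.inl hab
    · refine Or.inr ⟨hab, ?_⟩
      simp only [box] at hab'
      simp only [colSwap, box, Equiv.prodCongr_apply, Prod.map_apply, Equiv.swap_apply_def]
      rw [Fin.le_def] at h1 h2
      split_ifs <;> omega
  · intro b
    have hR := h.Rothe_mul_swap
    simp only [mem_readingList, List.mem_map, Finset.mem_image]
    constructor
    · rintro ⟨⟨a, ha, rfl⟩, -⟩
      exact ⟨a, ⟨ha, Rothe_bound (Finset.mem_of_mem_erase (hP ha))⟩, rfl⟩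
    · rintro ⟨a, ⟨ha, -⟩, rfl⟩
      refine ⟨⟨a, ha, rfl⟩, Rothe_bound (v := v * swap p q) ?_⟩
      rw [hR]
      exact Finset.mem_image_of_mem _ (hP ha)

lemma LastAsc.wordProd_image (h : LastAsc v p q)
    {P : Finset (ℕ × ℕ)}
    (hP : P ⊆ (Rothe v).erase (box v p q)) :
    wordProd (v * swap p q) (P.image (colSwap p q)) = wordProd v P := by
  rw [wordProd, h.readingList_image hP, wordProd, List.map_map]
  congr 1
  refine List.map_congr_left fun b hb => ?_
  rw [Function.comp_apply, h.canonLabel_colSwap (hP (mem_readingList.1 hb).1)]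

lemma LastAsc.hasWord_image (h : LastAsc v p q)
    {S : Finset (ℕ × ℕ)}
    (hS : S ⊆ (Rothe v).erase (box v p q)) (x : Equiv.Perm (Fin n)) :
    HasWord (v * swap p q) (S.image (colSwap p q)) x ↔ HasWord v S x := by
  constructor
  · rintro ⟨P, hP, h1, h2⟩
    obtain ⟨P, hP', rfl⟩ := Finset.subset_image_iff.1 hP
    have hP'' : P ⊆ S := by exact_mod_cast hP'
    rw [h.wordProd_image (hP''.trans hS)] at h1
    rw [Finset.card_image_of_injective _ (colSwap p q).injective] at h2
    exact ⟨P, hP'', h1, h2⟩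
  · rintro ⟨P, hP, h1, h2⟩
    refine ⟨P.image (colSwap p q), Finset.image_subset_image hP, ?_, ?_⟩
    · rw [h.wordProd_image (hP.trans hS), h1]
    · rw [Finset.card_image_of_injective _ (colSwap p q).injective, h2]

lemma boxRatio_colSwap (p q : Fin n) {b : ℕ × ℕ} (hb : b ∈ Rothe v) :
    boxRatio (v * swap p q) (colSwap p q b) = boxRatio v b := by
  obtain ⟨j, k, -, -, rfl⟩ := (mem_Rothe v b).1 hb
  rw [colSwap_box]
  simp only [boxRatio, box, permVal_fin, Equiv.Perm.mul_apply, Equiv.swap_apply_self]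

end LastAscent

/-- Without an ascent after position `m`, the permutation is decreasing from `m` on. -/
lemma decr_of_no_ascent (v : Equiv.Perm (Fin n)) (m : ℕ)
    (h : ∀ i' : ℕ, m < i' → i' < n → ¬ permVal v (i' - 1) < permVal v i') :
    ∀ j k : Fin n, m ≤ j → j < k → v k < v j := by
  have key : ∀ k : ℕ, ∀ hk : k < n, ∀ j : Fin n, m ≤ j → (j : ℕ) < k → v ⟨k, hk⟩ < v j := by
    intro k
    induction k with
    | zero => intro _ j _ hj; omega
    | succ k ih =>
      intro hk j hj hjk
      have h1 := h (k + 1) (by omega) hk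
      rw [Nat.add_sub_cancel, permVal_of_lt _ hk, permVal_of_lt _ (by omega : k < n)] at h1
      have h2 : v ⟨k + 1, hk⟩ < v ⟨k, by omega⟩ := by
        refine lt_of_le_of_ne (not_lt.1 h1) fun hc => ?_
        have := v.injective hc
        simp [Fin.ext_iff] at this
      by_cases hjk' : (j : ℕ) = k
      · have : j = ⟨k, by omega⟩ := Fin.ext hjk'
        rwa [this]
      · exact h2.trans (ih (by omega) j hj (by omega))
  intro j k hj hjk
  exact key k k.2 j hj hjk

lemma IsLastAscent.exists_lastAsc {v : Equiv.Perm (Fin n)} {i : ℕ} (h : IsLastAscent v i) :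
    ∃ p q : Fin n, (q : ℕ) = i ∧ LastAsc v p q := by
  obtain ⟨h1, h2, h3, h4⟩ := h
  have hp : i - 1 < n := by omega
  rw [permVal_of_lt _ h2, permVal_of_lt _ hp] at h3
  exact ⟨⟨i - 1, hp⟩, ⟨i, h2⟩, rfl, by simp only; omega, h3, decr_of_no_ascent v i h4⟩

lemma exists_isLastAscent {v : Equiv.Perm (Fin n)} (hv : v ≠ longest) :
    ∃ i, IsLastAscent v i := by
  set A := (Finset.range n).filter (fun i => 1 ≤ i ∧ permVal v (i - 1) < permVal v i) with hA
  by_cases hne : A.Nonempty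
  · have hm := Finset.mem_filter.1 (A.max'_mem hne)
    rw [Finset.mem_range] at hm
    refine ⟨A.max' hne, hm.2.1, hm.1, hm.2.2, fun i' h1 h2 h3 => ?_⟩
    have : i' ∈ A := by
      rw [hA, Finset.mem_filter, Finset.mem_range]
      exact ⟨h2, by omega, h3⟩
    exact absurd (A.le_max' i' this) (not_le.2 h1)
  · exfalso
    apply hv
    have hdec := decr_of_no_ascent v 0 (fun i' h1 h2 h3 => hne ⟨i', by
      rw [hA, Finset.mem_filter, Finset.mem_range]
      exact ⟨h2, by omega, h3⟩⟩)
    ext m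
    -- exactly the positions before `m` carry a value larger than `v m`
    have h1 := card_filter_lt_val v (v m)
    have h2 : (Finset.univ : Finset (Fin n)).filter (fun j => v m < v j) = Finset.Iio m := by
      ext j
      simp only [Finset.mem_filter, Finset.mem_univ, true_and, Finset.mem_Iio]
      refine ⟨fun h => ?_, fun h => hdec j m (Nat.zero_le _) h⟩
      rcases lt_trichotomy j m with hj | rfl | hj
      · exact hj
      · exact absurd h (lt_irrefl _)
      · exact absurd (hdec m j (Nat.zero_le _) hj) (not_lt.2 h.le)
    rw [h2, Fin.card_Iio] at h1
    have h3 := (v m).2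
    have h4 := m.2
    change _ = ((Fin.rev m : Fin n) : ℕ)
    rw [Fin.val_rev]
    omega

/-! ### The recursion for the `K`-polynomials -/

/-- The weight of the face `F` in the ambient set of boxes `Q`. -/
def faceWt (v : Equiv.Perm (Fin n)) (Q F : Finset (ℕ × ℕ)) : LaurentField :=
  (∏ b ∈ F, boxRatio v b) * ∏ b ∈ Q \ F, (1 - boxRatio v b)

/-- The `K`-polynomial with the face condition stated through `HasWord`. -/
lemma Kpoly_eq (v w : Equiv.Perm (Fin n)) :
    Kpoly v w = ∑ F ∈ (Rothe v).powerset,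
      if HasWord v (Rothe v \ F) (longest * w) then faceWt v (Rothe v) F else 0 := by
  rw [Kpoly, Finset.sum_filter]
  refine Finset.sum_congr rfl fun F hF => ?_
  simp only [isFace_iff, Finset.mem_powerset.1 hF, true_and]
  rfl

section LastAscent

variable {v : Equiv.Perm (Fin n)} {p q : Fin n}

/-- The `K`-polynomial at `v`, as a sum over the subsets of the diagram without its last box:
the two summands are the faces avoiding and using the last box. -/
lemma LastAsc.Kpoly_split (h : LastAsc v p q) (w : Equiv.Perm (Fin n)) :
    Kpoly v w = ∑ F ∈ ((Rothe v).erase (box v p q)).powerset,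
      ((if HasWord v (insert (box v p q) ((Rothe v).erase (box v p q) \ F)) (longest * w) then
          (1 - boxRatio v (box v p q)) * faceWt v ((Rothe v).erase (box v p q)) F else 0) +
        (if HasWord v ((Rothe v).erase (box v p q) \ F) (longest * w) then
          boxRatio v (box v p q) * faceWt v ((Rothe v).erase (box v p q)) F else 0)) := by
  rw [Kpoly_eq]
  have hz := h.z_mem
  set z := box v p q
  set Q := (Rothe v).erase z with hQ
  have hzQ : z ∉ Q := Finset.notMem_erase _ _
  rw [← Finset.insert_erase hz, ← hQ, Finset.sum_powerset_insert hzQ, ← Finset.sum_add_distrib]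
  refine Finset.sum_congr rfl fun F hF => ?_
  have hzF : z ∉ F := fun hc => hzQ (Finset.mem_powerset.1 hF hc)
  have e1 : insert z Q \ F = insert z (Q \ F) := Finset.insert_sdiff_of_notMem _ hzF
  have e2 : insert z Q \ insert z F = Q \ F := by
    ext b; simp only [Finset.mem_sdiff, Finset.mem_insert]
    by_cases hb : b = z
    · subst hb; simp [hzQ]
    · simp [hb]
  have hzQF : z ∉ Q \ F := fun hc => hzQ (Finset.mem_sdiff.1 hc).1
  rw [e1, e2]
  congr 2
  · rw [faceWt, faceWt, e1, Finset.prod_insert hzQF]; ring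
  · rw [faceWt, faceWt, e2, Finset.prod_insert hzF]; ring

/-- The `K`-polynomial at `v * s_p`, transported to the diagram of `v` without its last box. -/
lemma LastAsc.Kpoly_mul_swap (h : LastAsc v p q) (w : Equiv.Perm (Fin n)) :
    Kpoly (v * swap p q) w = ∑ F ∈ ((Rothe v).erase (box v p q)).powerset,
      if HasWord v ((Rothe v).erase (box v p q) \ F) (longest * w) then
        faceWt v ((Rothe v).erase (box v p q)) F else 0 := by
  have hinj := (colSwap p q).injective
  rw [Kpoly_eq, h.Rothe_mul_swap, Finset.powerset_image,
    Finset.sum_image (fun F _ G _ hFG => Finset.image_injective hinj hFG)]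
  refine Finset.sum_congr rfl fun F hF => ?_
  have hF' := Finset.mem_powerset.1 hF
  have hmem : ∀ b ∈ (Rothe v).erase (box v p q), b ∈ Rothe v :=
    fun b hb => Finset.mem_of_mem_erase hb
  rw [← Finset.image_sdiff _ _ hinj]
  simp only [h.hasWord_image Finset.sdiff_subset]
  congr 1
  rw [faceWt, faceWt, ← Finset.image_sdiff _ _ hinj, Finset.prod_image hinj.injOn,
    Finset.prod_image hinj.injOn]
  congr 1
  · exact Finset.prod_congr rfl fun b hb => boxRatio_colSwap p q (hmem b (hF' hb))
  · exact Finset.prod_congr rfl fun b hb => by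
      rw [boxRatio_colSwap p q (hmem b (Finset.mem_sdiff.1 hb).1)]

lemma longest_mul_lt (w : Equiv.Perm (Fin n)) {a b : Fin n} (h : w a < w b) :
    (longest * w : Equiv.Perm (Fin n)) b < (longest * w : Equiv.Perm (Fin n)) a := by
  change Fin.rev (w b) < Fin.rev (w a)
  rwa [Fin.rev_lt_rev]

/-- The recursion when `w` descends at `p`: the last box is then irrelevant for containing a word
for `longest * w`, and its weights `r` and `1 - r` add up to `1`. -/
lemma LastAsc.Kpoly_of_gt (h : LastAsc v p q) {w : Equiv.Perm (Fin n)} (hw : w q < w p) :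
    Kpoly v w = Kpoly (v * swap p q) w := by
  rw [h.Kpoly_split, h.Kpoly_mul_swap]
  refine Finset.sum_congr rfl fun F _ => ?_
  simp only [h.hasWord_insert_of_lt Finset.sdiff_subset (longest_mul_lt w hw)]
  split_ifs <;> ring

/-- The recursion when `w` ascends at `p`: faces using the last box contribute `r` times the sum
at `w`, faces avoiding it `1 - r` times the sum at `w * s_p`. -/
lemma LastAsc.Kpoly_of_lt (h : LastAsc v p q) {w : Equiv.Perm (Fin n)} (hw : w p < w q) :
    Kpoly v w = Kpoly (v * swap p q) w + (1 - boxRatio v (box v p q)) *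
      (Kpoly (v * swap p q) (w * swap p q) - Kpoly (v * swap p q) w) := by
  rw [h.Kpoly_split, h.Kpoly_mul_swap, h.Kpoly_mul_swap, ← Finset.sum_sub_distrib,
    Finset.mul_sum, ← Finset.sum_add_distrib]
  refine Finset.sum_congr rfl fun F _ => ?_
  have hx := longest_mul_lt w hw
  simp only [h.hasWord_insert_of_gt Finset.sdiff_subset hx, ← mul_assoc longest w (swap p q)]
  split_ifs <;> ring

/-! ### Vanishing off the Bruhat order -/

/-- The number of positions among the first `m` carrying one of the largest `a + 1` values. -/
def rankPre (w : Equiv.Perm (Fin n)) (a m : ℕ) : ℕ :=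
  ((Finset.univ : Finset (Fin n)).filter (fun t : Fin n => (t : ℕ) < m ∧ n ≤ (w t : ℕ) + a + 1)).card

lemma rankMat_eq (w : Equiv.Perm (Fin n)) (a j : ℕ) : rankMat w a j = rankPre w a (j + 1) := by
  symm
  refine Finset.card_bij (fun t _ => ((t : Fin n) : ℕ)) ?_ (fun _ _ _ _ h => Fin.ext h) ?_
  · intro t ht
    simp only [Finset.mem_filter, Finset.mem_univ, true_and, Finset.mem_range] at ht ⊢
    rw [permVal_fin]
    exact ⟨t.2, by omega, ht.2⟩
  · intro t ht
    simp only [Finset.mem_filter, Finset.mem_univ, true_and, Finset.mem_range] at ht ⊢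
    rw [permVal_of_lt _ ht.1] at ht
    exact ⟨⟨t, ht.1⟩, ⟨by simp only; omega, ht.2.2⟩, rfl⟩

lemma rankPre_succ (w : Equiv.Perm (Fin n)) (a : ℕ) (j : Fin n) :
    rankPre w a (j + 1) = rankPre w a j + if n ≤ (w j : ℕ) + a + 1 then 1 else 0 := by
  unfold rankPre
  split_ifs with hc
  · rw [← Finset.card_insert_of_notMem (a := j) (by simp)]
    congr 1
    ext t
    simp only [Finset.mem_filter, Finset.mem_univ, true_and, Finset.mem_insert]
    by_cases ht : t = j
    · subst ht; simp [hc]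
    · have : (t : ℕ) ≠ j := fun h => ht (Fin.ext h)
      simp only [ht, false_or]
      exact and_congr_left fun _ => by omega
  · rw [add_zero]
    congr 1
    ext t
    simp only [Finset.mem_filter, Finset.mem_univ, true_and]
    refine and_congr_left fun h => ?_
    have : (t : ℕ) ≠ j := by
      intro h'
      rw [Fin.ext h'] at h
      exact hc h
    omega

lemma rankMat_mul_swap (w : Equiv.Perm (Fin n)) (hpq : (q : ℕ) = p + 1) (a : ℕ) {j : ℕ}
    (hj : j ≠ p) : rankMat (w * swap p q) a j = rankMat w a j := by
  rw [rankMat_eq, rankMat_eq]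
  refine Finset.card_equiv (swap p q) fun t => ?_
  rw [Finset.mem_filter, Finset.mem_filter]
  simp only [Finset.mem_univ, true_and, Equiv.Perm.mul_apply]
  refine and_congr_left fun _ => ?_
  simp only [Equiv.swap_apply_def, Fin.ext_iff]
  split_ifs <;> omega

/-- At an ascent `p` of `v`, the rank conditions in column `p` follow from those in the two
adjacent columns. -/
lemma bruhatLE_of_ne {w : Equiv.Perm (Fin n)} (hpq : (q : ℕ) = p + 1) (hv : v p < v q)
    (h : ∀ a j : ℕ, j ≠ p → rankMat v a j ≤ rankMat w a j) : bruhatLE v w := by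
  intro a j
  by_cases hj : j = p
  · subst hj
    have h1 := h a q (by omega)
    have h2 : rankPre v a p ≤ rankPre w a p := by
      rcases Nat.eq_zero_or_pos (p : ℕ) with h0 | h0
      · simp [rankPre, h0]
      · have := h a (p - 1) (by omega)
        rwa [rankMat_eq, rankMat_eq, Nat.sub_add_cancel h0] at this
    rw [Fin.lt_def] at hv
    rw [rankMat_eq, rankMat_eq, rankPre_succ, rankPre_succ, hpq, rankPre_succ, rankPre_succ] at h1
    rw [rankMat_eq, rankMat_eq, rankPre_succ, rankPre_succ]
    split_ifs at h1 ⊢ <;> omega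
  · exact h a j hj

lemma LastAsc.bruhatLE_left (h : LastAsc v p q) {w : Equiv.Perm (Fin n)}
    (hw : bruhatLE (v * swap p q) w) : bruhatLE v w := by
  refine bruhatLE_of_ne h.succ h.lt fun a j hj => ?_
  rw [← rankMat_mul_swap v h.succ a hj]
  exact hw a j

lemma LastAsc.bruhatLE_both (h : LastAsc v p q) {w : Equiv.Perm (Fin n)}
    (hw : bruhatLE (v * swap p q) (w * swap p q)) : bruhatLE v w := by
  refine bruhatLE_of_ne h.succ h.lt fun a j hj => ?_
  rw [← rankMat_mul_swap v h.succ a hj, ← rankMat_mul_swap w h.succ a hj]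
  exact hw a j

lemma LastAsc.card_Rothe_mul_swap (h : LastAsc v p q) :
    (Rothe (v * swap p q)).card < (Rothe v).card := by
  rw [h.Rothe_mul_swap, Finset.card_image_of_injective _ (colSwap p q).injective]
  exact Finset.card_erase_lt_of_mem h.z_mem

end LastAscent

lemma longest_mul_longest : (longest * longest : Equiv.Perm (Fin n)) = 1 := by
  ext m
  change ((Fin.rev (Fin.rev m) : Fin n) : ℕ) = m
  rw [Fin.rev_rev]

lemma Rothe_longest : Rothe (longest : Equiv.Perm (Fin n)) = ∅ := by
  refine Finset.eq_empty_of_forall_notMem fun b hb => ?_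
  obtain ⟨j, k, hjk, hv, -⟩ := (mem_Rothe _ b).1 hb
  change Fin.rev j < Fin.rev k at hv
  rw [Fin.rev_lt_rev] at hv
  exact absurd hv (not_lt.2 hjk.le)

lemma wordProd_empty (v : Equiv.Perm (Fin n)) : wordProd v ∅ = 1 := by
  simp [wordProd, readingList_eq]

lemma Kpoly_longest (w : Equiv.Perm (Fin n)) :
    Kpoly longest w = if w = longest then 1 else 0 := by
  have hiff : HasWord (longest : Equiv.Perm (Fin n)) ∅ (longest * w) ↔ w = longest := by
    constructor
    · rintro ⟨P, hP, h1, -⟩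
      rw [Finset.subset_empty.1 hP, wordProd_empty] at h1
      rw [← one_mul w, ← longest_mul_longest, mul_assoc, ← h1, mul_one]
    · rintro rfl
      rw [longest_mul_longest]
      exact ⟨∅, le_rfl, wordProd_empty _, by rw [invCount_one, Finset.card_empty]⟩
  rw [Kpoly_eq, Rothe_longest]
  simp [hiff, faceWt]

/-- Vanishing follows from the recursion by induction on the size of the diagram, because
`v ≤ w` follows from either of `v * s_p ≤ w` and `v * s_p ≤ w * s_p`. -/
lemma Kpoly_eq_zero (v w : Equiv.Perm (Fin n)) (hvw : ¬ bruhatLE v w) : Kpoly v w = 0 := by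
  induction hc : (Rothe v).card using Nat.strong_induction_on generalizing v w with
  | _ c ih =>
    by_cases hv : v = longest
    · subst hv
      rw [Kpoly_longest, if_neg]
      rintro rfl
      exact hvw fun _ _ => le_rfl
    · obtain ⟨i, hi⟩ := exists_isLastAscent hv
      obtain ⟨p, q, -, h⟩ := hi.exists_lastAsc
      have h1 : Kpoly (v * swap p q) w = 0 :=
        ih _ (hc ▸ h.card_Rothe_mul_swap) _ _ (fun hw => hvw (h.bruhatLE_left hw)) rfl
      have h2 : Kpoly (v * swap p q) (w * swap p q) = 0 :=
        ih _ (hc ▸ h.card_Rothe_mul_swap) _ _ (fun hw => hvw (h.bruhatLE_both hw)) rfl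
      rcases swap_val_lt_or w h.succ with hw | hw
      · rw [h.Kpoly_of_lt hw, h1, h2, sub_zero, mul_zero, add_zero]
      · rw [h.Kpoly_of_gt hw, h1]

/-- Section 6.2, the Kostant–Kumar recursion for the pipe complex
`K`-polynomials: `K_{v,w} = 0` unless `v ≤ w`; `K_{w₀,w₀} = 1`; and the recursion at
the last ascent `i` of `v`, according to whether `i` is a descent or an ascent of `w`. -/
theorem Kpoly_recursion (n : ℕ) :
    (∀ v w : Equiv.Perm (Fin n), ¬ bruhatLE v w → Kpoly v w = 0) ∧
    (Kpoly (longest : Equiv.Perm (Fin n)) longest = 1) ∧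
    (∀ v w : Equiv.Perm (Fin n), ∀ i : ℕ, v ≠ longest → IsLastAscent v i →
      (invCount (w * adjSwap i) < invCount w → Kpoly v w = Kpoly (v * adjSwap i) w) ∧
      (invCount w < invCount (w * adjSwap i) →
        Kpoly v w = Kpoly (v * adjSwap i) w
          + (1 - tv (permVal v (i - 1) + 1) / tv (permVal v i + 1)) *
              (Kpoly (v * adjSwap i) (w * adjSwap i) - Kpoly (v * adjSwap i) w))) := by
  refine ⟨Kpoly_eq_zero, by rw [Kpoly_longest, if_pos rfl], fun v w i _ hi => ?_⟩
  obtain ⟨p, q, rfl, h⟩ := hi.exists_lastAsc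
  have hr : tv (permVal v (q - 1) + 1) / tv (permVal v q + 1) = boxRatio v (box v p q) := by
    have hp : (q : ℕ) - 1 = p := by have := h.succ; omega
    have hq : n - (n - 1 - (v q : ℕ)) = v q + 1 := by have := (v q).2; omega
    simp only [boxRatio, box, hp, hq, permVal_fin]
  rw [adjSwap_eq h.succ, hr]
  constructor
  · intro hw
    refine h.Kpoly_of_gt ((swap_val_lt_or w h.succ).resolve_left fun hc => ?_)
    have := invCount_mul_swap_of_lt w h.succ hc
    omega
  · intro hw
    refine h.Kpoly_of_lt ((swap_val_lt_or w h.succ).resolve_right fun hc => ?_)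
    have := invCount_mul_swap_of_gt w h.succ hc
    omega

end
end
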